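/- arXiv:1904.01800 — 6 statements merged into one kernel-verified Lean document; each statement's English description precedes it below -/
import Mathlib

section
/- Let Γ be a finite connected simple graph with r+1 vertices, where r+1 ≥ 3, and with n edges, where n ≥ 3, and let F_Γ be its Kirchhoff polynomial. Then for every point a ∈ (ℝ_{>0})^n and every real number s > (r−1)/r, the symmetric n×n matrix (−F_Γ·H_{F_Γ} + s·(∇F_Γ)ᵀ(∇F_Γ)) evaluated at a is positive definite; that is, F_Γ is strictly homogeneous log-concave at every point of the open positive orthant. -/
/-!
By the weighted matrix-tree theorem (`eval_kirchhoff`), `F(x) = det L(x)` for the reduced weighted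
Laplacian `L(x) = B diag(x) Bᵀ`, where `B` is the oriented incidence matrix with one row deleted.
This follows from the Cauchy–Binet formula (`det_conj_diag`) and the value of the maximal minors of
`B` (`det_redInc_sq`).

For `a` in the open positive orthant, `L(a)` is positive definite because `G` is connected. Given a
direction `v`, simultaneous diagonalization of `L(a)` and `L(v)` (`exists_pencil`) yields real
numbers `l i`, one for each of the `r` non-root vertices, with
`F(a + t v) = F(a) ∏ i, (1 + l i * t)`. Comparing Taylor coefficients at `t = 0`, the quadratic form
of the matrix at `v` equals `F(a)² (∑ l i² - (1 - s) (∑ l i)²)`. By Cauchy–Schwarz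
`(∑ l i)² ≤ r ∑ l i²`, and `(1 - s) r < 1`, so this is positive unless all `l i` vanish. In that
case `L(v) = 0`, which forces `v = 0` since `G` is simple (`weight_eq_zero`).
-/

open MvPolynomial

/-- A spanning tree of a graph `G`, given as a set `T` of edges of `G` with `|V| - 1` edges
whose spanning subgraph is connected. -/
def IsSpanningTree {V : Type} [Fintype V] [DecidableEq V] (G : SimpleGraph V)
    (T : Finset G.edgeSet) : Prop :=
  T.card = Fintype.card V - 1 ∧
    (SimpleGraph.fromEdgeSet (Subtype.val '' (T : Set G.edgeSet))).Connected

open scoped Classical in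
/-- The Kirchhoff polynomial of a graph: the sum over all spanning trees of the product of the
variables corresponding to the edges of the tree. -/
noncomputable def kirchhoff {V : Type} [Fintype V] [DecidableEq V] (G : SimpleGraph V)
    [Fintype G.edgeSet] : MvPolynomial G.edgeSet ℝ :=
  ∑ T : Finset G.edgeSet, if IsSpanningTree G T then ∏ e ∈ T, X e else 0

section

open Matrix Finset
open scoped MatrixOrder

/-! ### Cauchy–Binet -/

/-- The Cauchy–Binet formula for `B * diagonal x * Bᵀ`, where the squared maximal minor on the
column set `S` is named `c S`. The determinant is expanded multilinearly in the rows; a choice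
`f : W → E` of a column for each row contributes only if it is injective, and the choices with
image `S` correspond to permutations of `W`. -/
theorem det_conj_diag {W E : Type*} [Fintype W] [DecidableEq W] [Fintype E] [DecidableEq E]
    (B : Matrix W E ℝ) (x : E → ℝ) (c : Finset E → ℝ)
    (hc : ∀ (S : Finset E) (g : W ≃ S), (Matrix.of fun i j => B i (g j)).det ^ 2 = c S) :
    (B * diagonal x * Bᵀ).det
      = ∑ S : Finset E, if S.card = Fintype.card W then c S * ∏ e ∈ S, x e else 0 := by
  have hexp : (B * diagonal x * Bᵀ).det
      = ∑ f : W → E, (∏ i, B i (f i) * x (f i)) * (Matrix.of fun i j => B j (f i)).det := by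
    have hrow : B * diagonal x * Bᵀ
        = fun i => ∑ e : E, (B i e * x e) • (fun j => B j e : W → ℝ) := by
      ext i j
      simp [Matrix.mul_apply, Matrix.diagonal_apply, Finset.sum_apply]
    rw [hrow]
    change detRowAlternating.toMultilinearMap _ = _
    rw [MultilinearMap.map_sum]
    refine Finset.sum_congr rfl fun f _ => ?_
    rw [MultilinearMap.map_smul_univ, smul_eq_mul]
    rfl
  rw [hexp, ← Finset.sum_fiberwise (s := univ) (g := fun f : W → E => univ.image f)]
  refine Finset.sum_congr rfl fun S _ => ?_
  split_ifs with hS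
  · have g : W ≃ S := Fintype.equivOfCardEq (by simp [hS])
    have hterm : ∀ σ : Equiv.Perm W,
        (∏ i, B i (g (σ i)) * x (g (σ i)))
            * (Matrix.of fun i j => B j ((g (σ i) : S) : E)).det
        = (∏ e ∈ S, x e) * (Matrix.of fun i j => B i (g j)).det
            * ((Equiv.Perm.sign σ : ℤ) * ∏ i, B i (g (σ i))) := by
      intro σ
      have h1 : ∏ i, x (g (σ i)) = ∏ e ∈ S, x e := by
        rw [← Finset.prod_coe_sort S x]
        exact Equiv.prod_comp (σ.trans g) (fun e : S => x e)
      have h2 : (Matrix.of fun i j => B j ((g (σ i) : S) : E)).det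
          = (Equiv.Perm.sign σ : ℤ) * (Matrix.of fun i j => B i (g j)).det := by
        rw [← Matrix.det_transpose (Matrix.of fun i j => B i (g j)), ← Matrix.det_permute]
        rfl
      rw [Finset.prod_mul_distrib, h1, h2]
      ring
    have hdet : ∑ σ : Equiv.Perm W, ((Equiv.Perm.sign σ : ℤ) : ℝ) * ∏ i, B i (g (σ i))
        = (Matrix.of fun i j => B i (g j)).det := by
      rw [← Matrix.det_transpose, Matrix.det_apply']
      rfl
    rw [← hc S g, sq, mul_comm, ← mul_assoc]
    conv_rhs => rw [← hdet, Finset.mul_sum]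
    rw [hdet]
    symm
    refine Finset.sum_bij (fun σ _ => fun i => ((g (σ i) : S) : E)) ?_ ?_ ?_ ?_
    · intro σ _
      simp only [Finset.mem_filter, Finset.mem_univ, true_and]
      ext e
      simp only [Finset.mem_image, Finset.mem_univ, true_and]
      constructor
      · rintro ⟨i, rfl⟩
        exact (g (σ i)).2
      · intro he
        exact ⟨σ.symm (g.symm ⟨e, he⟩), by simp⟩
    · intro σ _ τ _ h
      ext i
      have := congrFun h i
      exact g.injective (Subtype.ext this)
    · intro f hf
      simp only [Finset.mem_filter, Finset.mem_univ, true_and] at hf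
      have hinj : Function.Injective f := by
        have : (univ.image f).card = (univ : Finset W).card := by rw [hf, hS]; rfl
        exact fun a b h => Finset.card_image_iff.mp this (by simp) (by simp) h
      have hmem : ∀ i, f i ∈ S := fun i => hf ▸ Finset.mem_image_of_mem f (Finset.mem_univ i)
      have hbij : Function.Bijective (fun i => g.symm ⟨f i, hmem i⟩) :=
        Finite.injective_iff_bijective.mp fun a b h => by
          have := g.symm.injective h
          exact hinj (congrArg Subtype.val this)
      exact ⟨Equiv.ofBijective _ hbij, Finset.mem_univ _, by ext i; simp⟩
    · intro σ _
      rw [hterm]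
  · refine Finset.sum_eq_zero fun f hf => ?_
    simp only [Finset.mem_filter, Finset.mem_univ, true_and] at hf
    have hninj : ¬ Function.Injective f := by
      intro h
      apply hS
      rw [← hf, Finset.card_image_of_injective _ h]
      rfl
    simp only [Function.Injective, not_forall] at hninj
    obtain ⟨i, j, hij, hne⟩ := hninj
    rw [Matrix.det_zero_of_row_eq hne, mul_zero]
    ext k
    simp [hij]

/-! ### Restriction of a polynomial to a line -/

/-- The first two elementary symmetric functions, the second one through power sums. -/
theorem prod_linear_coeffs {W : Type*} (s : Finset W) (l : W → ℝ) :
    (∏ i ∈ s, (1 + Polynomial.C (l i) * Polynomial.X)).coeff 0 = 1 ∧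
    (∏ i ∈ s, (1 + Polynomial.C (l i) * Polynomial.X)).coeff 1 = ∑ i ∈ s, l i ∧
    2 * (∏ i ∈ s, (1 + Polynomial.C (l i) * Polynomial.X)).coeff 2
      = (∑ i ∈ s, l i) ^ 2 - ∑ i ∈ s, l i ^ 2 := by
  classical
  induction s using Finset.induction_on with
  | empty => simp [Polynomial.coeff_one]
  | insert i s hi ih =>
    obtain ⟨h0, h1, h2⟩ := ih
    rw [Finset.prod_insert hi, Finset.sum_insert hi, Finset.sum_insert hi]
    simp only [add_mul, one_mul, mul_assoc, Polynomial.coeff_add, Polynomial.coeff_C_mul]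
    refine ⟨?_, ?_, ?_⟩
    · simp [h0]
    · rw [Polynomial.coeff_X_mul, h0, h1]; ring
    · rw [Polynomial.coeff_X_mul, h1]; linear_combination h2

/-- The chain rule along the line `t ↦ a + t v`. -/
theorem derivative_line {σ : Type*} [Fintype σ] (a v : σ → ℝ) (q : MvPolynomial σ ℝ) :
    Polynomial.derivative
        (MvPolynomial.aeval (fun i => Polynomial.C (a i) + Polynomial.C (v i) * Polynomial.X) q)
      = ∑ i, Polynomial.C (v i) * MvPolynomial.aeval
          (fun i => Polynomial.C (a i) + Polynomial.C (v i) * Polynomial.X)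
          (MvPolynomial.pderiv i q) := by
  classical
  induction q using MvPolynomial.induction_on with
  | C c => simp [Polynomial.derivative_C]
  | add p q hp hq => simp [hp, hq, mul_add, Finset.sum_add_distrib]
  | mul_X p j hp =>
    simp only [map_mul, Polynomial.derivative_mul, hp, MvPolynomial.aeval_X, Derivation.leibniz,
      MvPolynomial.pderiv_X, smul_eq_mul, map_add, mul_add, Finset.sum_add_distrib]
    simp [Pi.single_apply, Finset.sum_mul]
    rw [← add_assoc, ← Finset.sum_add_distrib, add_comm]
    refine congrArg₂ _ (mul_comm _ _) (Finset.sum_congr rfl fun i _ => ?_)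
    ring

theorem pderiv_pderiv_comm {σ : Type*} (i j : σ) (p : MvPolynomial σ ℝ) :
    pderiv i (pderiv j p) = pderiv j (pderiv i p) := by
  classical
  have h0 : ⁅(pderiv i : Derivation ℝ (MvPolynomial σ ℝ) (MvPolynomial σ ℝ)),
      (pderiv j : Derivation ℝ (MvPolynomial σ ℝ) (MvPolynomial σ ℝ))⁆ = 0 := by
    apply MvPolynomial.derivation_ext
    intro k
    simp [Derivation.commutator_apply, pderiv_X, Pi.single_apply, apply_ite]
  have h := congrArg (fun D => D p) h0
  simpa [Derivation.commutator_apply, sub_eq_zero] using h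

/-! ### Pencils of symmetric matrices -/

/-- Simultaneous diagonalization: `l` consists of the eigenvalues of `C⁻ᴴ N C⁻¹`, where
`A = Cᴴ C`. -/
theorem exists_pencil {W : Type*} [Fintype W] [DecidableEq W] {A N : Matrix W W ℝ}
    (hA : A.PosDef) (hN : N.IsHermitian) :
    ∃ l : W → ℝ, (∀ t : ℝ, (A + t • N).det = A.det * ∏ i, (1 + l i * t)) ∧ (l = 0 → N = 0) := by
  obtain ⟨C, hC⟩ : ∃ C : Matrix W W ℝ, A = Cᴴ * C :=
    (CStarAlgebra.nonneg_iff_eq_star_mul_self).mp hA.posSemidef.nonneg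
  have hCu : IsUnit C.det := by
    have := hA.det_pos
    rw [hC, det_mul] at this
    exact isUnit_iff_ne_zero.mpr fun h => by simp [h] at this
  have hCu' : IsUnit Cᴴ.det := by rw [det_conjTranspose]; exact hCu.star
  set M := Cᴴ⁻¹ * N * C⁻¹ with hM
  have hNM : N = Cᴴ * M * C := by
    rw [hM]
    simp only [Matrix.mul_assoc]
    rw [Matrix.nonsing_inv_mul _ hCu, Matrix.mul_one, ← Matrix.mul_assoc,
      Matrix.mul_nonsing_inv _ hCu', Matrix.one_mul]
  have hMh : M.IsHermitian := by
    have : (Cᴴ)⁻¹ = (C⁻¹)ᴴ := (Matrix.conjTranspose_nonsing_inv C).symm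
    rw [hM, this]
    exact Matrix.isHermitian_conjTranspose_mul_mul _ hN
  refine ⟨hMh.eigenvalues, fun t => ?_, fun h => ?_⟩
  · have h1 : A + t • N = Cᴴ * (1 + t • M) * C := by
      rw [hNM, hC]; simp [Matrix.mul_add, Matrix.add_mul]
    have h2 : (1 + t • M).det = ∏ i, (1 + hMh.eigenvalues i * t) := by
      have h3 : 1 + t • M = Unitary.conjStarAlgAut ℝ _ hMh.eigenvectorUnitary
          (diagonal fun i => 1 + hMh.eigenvalues i * t) := by
        conv_lhs => rw [hMh.spectral_theorem]
        rw [← map_one (Unitary.conjStarAlgAut ℝ _ hMh.eigenvectorUnitary), ← map_smul, ← map_add]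
        congr 1
        ext i j
        by_cases hij : i = j
        · subst hij; simp [mul_comm]
        · simp [hij]
      rw [h3, Unitary.conjStarAlgAut_apply, det_mul_comm, ← Matrix.mul_assoc]
      simp
    rw [h1, det_mul, det_mul, h2, hC, det_mul]
    ring
  · rw [hMh.eigenvalues_eq_zero_iff] at h
    rw [hNM, h]; simp

/-! ### The reduced incidence matrix and the matrix-tree theorem -/

theorem mk_out {V : Type} (e : Sym2 V) : s((Quot.out e).1, (Quot.out e).2) = e := Quot.out_eq e

section Graph

variable {V : Type} [Fintype V] [DecidableEq V] (G : SimpleGraph V)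

/-- The reduced oriented incidence matrix of `G`, with the row of the root `ρ` deleted: the column
of an edge is (indicator of its head) minus (indicator of its tail). The orientation of each edge
is the arbitrary one given by `Quot.out` on unordered pairs. -/
noncomputable def redInc (R : Type*) [Ring R] (ρ : V) : Matrix {v : V // v ≠ ρ} G.edgeSet R :=
  Matrix.of fun w e =>
    (if (Quot.out e.1).1 = w.1 then 1 else 0) - (if (Quot.out e.1).2 = w.1 then 1 else 0)

/-- Multiplying the incidence matrix by a function on the left gives its discrete gradient,
provided the function vanishes at the deleted vertex. -/
theorem vecMul_redInc {R : Type*} [Ring R] (ρ : V) (Y : V → R) (hY : Y ρ = 0) (e : G.edgeSet) :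
    ∑ w : {v : V // v ≠ ρ}, Y w * redInc G R ρ w e
      = Y (Quot.out e.1).1 - Y (Quot.out e.1).2 := by
  have key : ∀ u : V, ∑ w : {v : V // v ≠ ρ}, Y w * (if u = w.1 then (1 : R) else 0) = Y u := by
    intro u
    have h := Finset.sum_subtype_of_mem (p := fun v => v ≠ ρ)
      (s := univ.filter fun v => v ≠ ρ) (fun v => Y v * (if u = v then (1 : R) else 0))
      (by simp)
    have h2 : (univ.filter fun v => v ≠ ρ).subtype (fun v => v ≠ ρ) = univ := by
      ext w; simpa using w.2
    rw [h2] at h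
    rw [h]
    by_cases hu : u = ρ
    · subst hu
      rw [hY]
      refine Finset.sum_eq_zero fun v hv => ?_
      simp only [Finset.mem_filter, Finset.mem_univ, true_and] at hv
      simp [Ne.symm hv]
    · simp [hu]
  simp only [redInc, Matrix.of_apply, mul_sub, Finset.sum_sub_distrib, key]

theorem vecMul_redInc_injective (hconn : G.Connected) (ρ : V) :
    Function.Injective (redInc G ℝ ρ).vecMul := by
  have h0 : ∀ x : {v : V // v ≠ ρ} → ℝ, x ᵥ* redInc G ℝ ρ = 0 → x = 0 := by
    intro x hx
    set Y : V → ℝ := fun v => if h : v ≠ ρ then x ⟨v, h⟩ else 0 with hYdef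
    have hYρ : Y ρ = 0 := by simp [hYdef]
    have hYx : ∀ w : {v : V // v ≠ ρ}, Y w = x w := fun w => by simp [hYdef, w.2]
    have hadj : ∀ u v, G.Adj u v → Y u = Y v := by
      intro u v huv
      have h1 := vecMul_redInc G ρ Y hYρ ⟨s(u, v), huv⟩
      have h2 := congrFun hx ⟨s(u, v), huv⟩
      simp only [Matrix.vecMul, dotProduct, Pi.zero_apply] at h2
      simp only [hYx] at h1
      rw [h2] at h1
      have h3 := mk_out s(u, v)
      rw [Sym2.eq_iff] at h3
      rcases h3 with ⟨h3, h4⟩ | ⟨h3, h4⟩ <;> rw [h3, h4] at h1 <;> linarith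
    have hwalk : ∀ u v, G.Walk u v → Y u = Y v := by
      intro u v p
      induction p with
      | nil => rfl
      | cons h _ ih => rw [hadj _ _ h, ih]
    have hall : ∀ v, Y v = 0 := fun v =>
      (hconn.preconnected v ρ).elim fun p => (hwalk v ρ p).trans hYρ
    ext w
    rw [← hYx, hall, Pi.zero_apply]
  intro x y hxy
  have := h0 (x - y) (by rw [Matrix.sub_vecMul]; exact sub_eq_zero.mpr hxy)
  exact sub_eq_zero.mp this

/-- A weight function is determined by its reduced Laplacian. This uses that `G` is simple: the
edge `uv` is the only one contributing to the `(u, v)` entry. -/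
theorem weight_eq_zero [Fintype G.edgeSet] (ρ : V) (v : G.edgeSet → ℝ)
    (h : redInc G ℝ ρ * diagonal v * (redInc G ℝ ρ)ᵀ = 0) : v = 0 := by
  -- Gradients ignore constants, so the bilinear form extends to functions not vanishing at `ρ`.
  have hbil : ∀ Y Z : V → ℝ, ∑ e : G.edgeSet, v e
      * (Y (Quot.out e.1).1 - Y (Quot.out e.1).2) * (Z (Quot.out e.1).1 - Z (Quot.out e.1).2)
      = 0 := by
    intro Y Z
    have hgrad : ∀ (Y : V → ℝ) (e : G.edgeSet),
        ((fun w : {v : V // v ≠ ρ} => Y w - Y ρ) ᵥ* redInc G ℝ ρ) e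
          = Y (Quot.out e.1).1 - Y (Quot.out e.1).2 := by
      intro Y e
      have := vecMul_redInc G ρ (fun v => Y v - Y ρ) (by simp) e
      simp only [sub_sub_sub_cancel_right] at this
      exact this
    have h1 : (fun w : {v : V // v ≠ ρ} => Y w - Y ρ) ⬝ᵥ
        ((redInc G ℝ ρ * diagonal v * (redInc G ℝ ρ)ᵀ) *ᵥ fun w => Z w - Z ρ) = 0 := by
      rw [h]; simp
    rw [← Matrix.mulVec_mulVec, ← Matrix.mulVec_mulVec, Matrix.dotProduct_mulVec,
      Matrix.mulVec_transpose, dotProduct] at h1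
    rw [← h1]
    refine Finset.sum_congr rfl fun e _ => ?_
    rw [hgrad, Matrix.mulVec_diagonal, hgrad]
    ring
  ext e
  set p := (Quot.out e.1).1 with hp
  set q := (Quot.out e.1).2 with hq
  have hpq : p ≠ q := by
    have h1 : s(p, q) ∈ G.edgeSet := by rw [hp, hq, mk_out]; exact e.2
    exact G.ne_of_adj h1
  have h1 := hbil (fun u => if u = p then 1 else 0) (fun u => if u = q then 1 else 0)
  rw [Finset.sum_eq_single e] at h1
  · rw [← hp, ← hq] at h1
    simp only [if_true, hpq, hpq.symm, if_false] at h1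
    rw [Pi.zero_apply]
    linarith
  · intro e' _ hne
    have h2 : ¬ (s((Quot.out e'.1).1, (Quot.out e'.1).2) = s(p, q)) := by
      rw [mk_out, hp, hq, mk_out]
      exact fun h => hne (Subtype.ext h)
    have h3 : (Quot.out e'.1).1 ≠ (Quot.out e'.1).2 := by
      have h1 : s((Quot.out e'.1).1, (Quot.out e'.1).2) ∈ G.edgeSet := by rw [mk_out]; exact e'.2
      exact G.ne_of_adj h1
    rw [Sym2.eq_iff] at h2
    by_cases ha : (Quot.out e'.1).1 = p <;> by_cases hb : (Quot.out e'.1).2 = p <;>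
      by_cases hc : (Quot.out e'.1).1 = q <;> by_cases hd : (Quot.out e'.1).2 = q <;>
      simp_all
  · simp

open scoped Classical in
/-- The maximal minors of the reduced incidence matrix are `±1` on spanning trees and `0`
otherwise. If the edge set `S` is connected, every standard basis vector is an integral combination
of the columns (follow a path from the root), so the integral minor is a unit. Otherwise the
indicator of the vertices not reachable from the root lies in the left kernel. -/
theorem det_redInc_sq (ρ : V) (S : Finset G.edgeSet) (g : {v : V // v ≠ ρ} ≃ S) :
    (Matrix.of fun i j => redInc G ℝ ρ i (g j)).det ^ 2
      = if (SimpleGraph.fromEdgeSet (Subtype.val '' (S : Set G.edgeSet))).Connected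
        then 1 else 0 := by
  set H := SimpleGraph.fromEdgeSet (Subtype.val '' (S : Set G.edgeSet)) with hH
  split_ifs with hc
  · set M : Matrix {v : V // v ≠ ρ} {v : V // v ≠ ρ} ℤ :=
      Matrix.of fun i j => redInc G ℤ ρ i (g j) with hM
    have hcast : (Matrix.of fun i j => redInc G ℝ ρ i (g j)) = M.map (Int.castRingHom ℝ) := by
      ext i j
      simp [hM, redInc]
    have hcol : ∀ j, (fun i => M i j) ∈ LinearMap.range M.mulVecLin := by
      intro j
      refine ⟨Pi.single j 1, ?_⟩
      ext i
      simp
    have hstep : ∀ u v, H.Adj u v →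
        (fun i : {v : V // v ≠ ρ} => if v = i.1 then (1 : ℤ) else 0)
            ∈ LinearMap.range M.mulVecLin →
        (fun i : {v : V // v ≠ ρ} => if u = i.1 then (1 : ℤ) else 0)
            ∈ LinearMap.range M.mulVecLin := by
      intro u v huv hv
      rw [hH, SimpleGraph.fromEdgeSet_adj] at huv
      obtain ⟨⟨e, heS, he⟩, -⟩ := huv
      have hcole := hcol (g.symm ⟨e, heS⟩)
      simp only [hM, redInc, Matrix.of_apply, Equiv.apply_symm_apply] at hcole
      have h3 := mk_out e.1
      nth_rw 3 [he] at h3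
      rw [Sym2.eq_iff] at h3
      rcases h3 with ⟨h3, h4⟩ | ⟨h3, h4⟩ <;> rw [h3, h4] at hcole
      · convert add_mem hv hcole using 1
        ext i; simp
      · convert sub_mem hv hcole using 1
        ext i; simp
    have hwalk : ∀ u v, H.Walk u v →
        (fun i : {v : V // v ≠ ρ} => if v = i.1 then (1 : ℤ) else 0)
            ∈ LinearMap.range M.mulVecLin →
        (fun i : {v : V // v ≠ ρ} => if u = i.1 then (1 : ℤ) else 0)
            ∈ LinearMap.range M.mulVecLin := by
      intro u v p
      induction p with
      | nil => exact id
      | cons h _ ih => exact fun hv => hstep _ _ h (ih hv)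
    have hall : ∀ v, (fun i : {v : V // v ≠ ρ} => if v = i.1 then (1 : ℤ) else 0)
            ∈ LinearMap.range M.mulVecLin := by
      intro v
      obtain ⟨p⟩ := hc.preconnected v ρ
      refine hwalk v ρ p ?_
      -- the indicator of the root vanishes on the remaining vertices
      convert zero_mem (LinearMap.range M.mulVecLin) using 1
      ext i; simp [Ne.symm i.2]
    choose c hcc using fun j : {v : V // v ≠ ρ} => hall j.1
    have hinv : M * (Matrix.of fun i j => c j i) = 1 := by
      ext i j
      have := congrFun (hcc j) i
      simp only [Matrix.mulVecLin_apply, Matrix.mulVec, dotProduct] at this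
      rw [Matrix.mul_apply, Matrix.one_apply]
      simp only [Matrix.of_apply, this, Subtype.ext_iff, eq_comm]
    have hunit : IsUnit M.det := by
      apply IsUnit.of_mul_eq_one (Matrix.of fun i j => c j i).det
      rw [← Matrix.det_mul, hinv, Matrix.det_one]
    have hsq : M.det ^ 2 = 1 := Int.isUnit_sq hunit
    rw [hcast, ← RingHom.mapMatrix_apply, ← RingHom.map_det, ← map_pow, hsq, map_one]
  · have hdet : (Matrix.of fun i j => redInc G ℝ ρ i (g j)).det = 0 := by
      rw [← Matrix.exists_vecMul_eq_zero_iff]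
      set Y : V → ℝ := fun v => if H.Reachable ρ v then 0 else 1 with hY
      have hYρ : Y ρ = 0 := by simp [hY]
      refine ⟨fun w => Y w, ?_, ?_⟩
      · obtain ⟨v, hv⟩ : ∃ v, ¬ H.Reachable ρ v := by
          by_contra! hcon
          exact hc ((SimpleGraph.connected_iff _).mpr
            ⟨fun u v => (hcon u).symm.trans (hcon v), ⟨ρ⟩⟩)
        have hvρ : v ≠ ρ := by rintro rfl; exact hv (SimpleGraph.Reachable.refl _)
        intro h0
        have := congrFun h0 ⟨v, hvρ⟩
        simp [hY, hv] at this
      · ext j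
        have h1 := vecMul_redInc G ρ Y hYρ (g j)
        simp only [Matrix.vecMul, dotProduct, Matrix.of_apply, Pi.zero_apply]
        rw [h1, sub_eq_zero]
        set p := (Quot.out (g j).1.1).1 with hp
        set q := (Quot.out (g j).1.1).2 with hq
        have hpq : s(p, q) = (g j).1.1 := mk_out _
        have hadj : H.Adj p q := by
          rw [hH, SimpleGraph.fromEdgeSet_adj, hpq]
          refine ⟨⟨(g j).1, (g j).2, rfl⟩, ?_⟩
          have : s(p, q) ∈ G.edgeSet := by rw [hpq]; exact (g j).1.2
          exact G.ne_of_adj this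
        have : H.Reachable ρ p ↔ H.Reachable ρ q :=
          ⟨fun h => h.trans hadj.reachable, fun h => h.trans hadj.symm.reachable⟩
        simp [hY, this]
    rw [hdet]; simp

/-- The weighted matrix-tree theorem: the Kirchhoff polynomial is the determinant of the reduced
weighted Laplacian. -/
theorem eval_kirchhoff [Fintype G.edgeSet] (ρ : V) (x : G.edgeSet → ℝ) :
    eval x (kirchhoff G) = (redInc G ℝ ρ * diagonal x * (redInc G ℝ ρ)ᵀ).det := by
  classical
  rw [det_conj_diag _ _ _ (det_redInc_sq G ρ), kirchhoff, map_sum]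
  refine Finset.sum_congr rfl fun S _ => ?_
  have hcard : Fintype.card {v : V // v ≠ ρ} = Fintype.card V - 1 := by simp
  rw [hcard, IsSpanningTree]
  by_cases h1 : S.card = Fintype.card V - 1 <;>
    by_cases h2 : (SimpleGraph.fromEdgeSet (Subtype.val '' (S : Set G.edgeSet))).Connected <;>
    simp [h1, h2]

end Graph

end

/-! ### Strict log-concavity -/

/-- for a finite connected simple graph `Γ` with `r + 1 ≥ 3` vertices and
`n ≥ 3` edges, the Kirchhoff polynomial is strictly homogeneous log-concave at every point of the
open positive orthant: for every `a` with all coordinates positive and every `s > (r-1)/r`, the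
matrix `-F·H_F + s·(∇F)ᵀ(∇F)` evaluated at `a` is positive definite. -/
theorem kirchhoff_strictly_homog_logConcave_pos_orthant
    {V : Type} [Fintype V] [DecidableEq V] (G : SimpleGraph V) [Fintype G.edgeSet]
    (hconn : G.Connected) (r n : ℕ)
    (hV : Fintype.card V = r + 1) (hr : 3 ≤ r + 1)
    (hE : Fintype.card G.edgeSet = n) (hn : 3 ≤ n)
    (a : G.edgeSet → ℝ) (ha : ∀ e, 0 < a e)
    (s : ℝ) (hs : ((r : ℝ) - 1) / (r : ℝ) < s) :
    (Matrix.of fun i j : G.edgeSet =>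
        -(eval a (kirchhoff G)) * eval a (pderiv i (pderiv j (kirchhoff G)))
          + s * (eval a (pderiv i (kirchhoff G)) * eval a (pderiv j (kirchhoff G)))).PosDef := by
  classical
  obtain ⟨ρ⟩ := hconn.nonempty
  refine Matrix.PosDef.of_dotProduct_mulVec_pos ?_ fun v hv => ?_
  · ext i j
    simp only [Matrix.conjTranspose_apply, Matrix.of_apply, star_trivial]
    rw [pderiv_pderiv_comm i j]
    ring
  set F := kirchhoff G with hF
  set B := redInc G ℝ ρ with hB
  have hA : (B * Matrix.diagonal a * B.transpose).PosDef := by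
    have := (Matrix.PosDef.diagonal ha).mul_mul_conjTranspose_same
      (vecMul_redInc_injective G hconn ρ)
    rwa [Matrix.conjTranspose_eq_transpose_of_trivial] at this
  have hN : (B * Matrix.diagonal v * B.transpose).IsHermitian := by
    rw [Matrix.IsHermitian, Matrix.conjTranspose_eq_transpose_of_trivial]
    simp [Matrix.transpose_mul, Matrix.mul_assoc]
  obtain ⟨l, hl, hl0⟩ := exists_pencil hA hN
  have hlne : l ≠ 0 := fun h => hv (weight_eq_zero G ρ v (hl0 h))
  have hFa : eval a F = (B * Matrix.diagonal a * B.transpose).det := eval_kirchhoff G ρ a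
  have hFpos : 0 < eval a F := hFa ▸ hA.det_pos
  -- Composition with `φ` restricts a polynomial to the line `a + t v`.
  set φ : G.edgeSet → Polynomial ℝ :=
    fun i => Polynomial.C (a i) + Polynomial.C (v i) * Polynomial.X with hφ
  have hev : ∀ (t : ℝ) (q : MvPolynomial G.edgeSet ℝ),
      (aeval φ q).eval t = eval (fun e => a e + v e * t) q := by
    intro t q
    rw [← Polynomial.coe_evalRingHom, MvPolynomial.map_aeval, MvPolynomial.eval, hφ]
    congr 1
    ext <;> simp
  have hev0 : ∀ q : MvPolynomial G.edgeSet ℝ, (aeval φ q).eval 0 = eval a q := by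
    intro q; rw [hev]; simp
  have hpoly : aeval φ F
      = Polynomial.C (eval a F) * ∏ i, (1 + Polynomial.C (l i) * Polynomial.X) := by
    refine Polynomial.funext fun t => ?_
    rw [hev, hF, eval_kirchhoff G ρ, ← hF, hFa, Polynomial.eval_mul, Polynomial.eval_prod]
    simp only [Polynomial.eval_C, Polynomial.eval_add, Polynomial.eval_one, Polynomial.eval_mul,
      Polynomial.eval_X]
    rw [← hl]
    congr 1
    rw [← Matrix.smul_mul, ← Matrix.mul_smul, ← Matrix.add_mul, ← Matrix.mul_add]
    congr 2
    ext i j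
    by_cases hij : i = j
    · subst hij; simp [mul_comm]
    · simp [hij]
  obtain ⟨-, hc1, hc2⟩ := prod_linear_coeffs Finset.univ l
  have hder : ∀ q : MvPolynomial G.edgeSet ℝ, Polynomial.derivative (aeval φ q)
      = ∑ i, Polynomial.C (v i) * aeval φ (pderiv i q) := derivative_line a v
  have hd1 : ∑ i, v i * eval a (pderiv i F) = eval a F * ∑ i, l i := by
    have h := congrArg (Polynomial.eval 0) (hder F)
    rw [Polynomial.eval_finsetSum] at h
    simp only [Polynomial.eval_mul, Polynomial.eval_C, hev0] at h
    rw [← h, hpoly, ← Polynomial.coeff_zero_eq_eval_zero, Polynomial.coeff_derivative,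
      Polynomial.coeff_C_mul, hc1]
    simp
  have hd2 : ∑ j, v j * ∑ i, v i * eval a (pderiv i (pderiv j F))
      = eval a F * ((∑ i, l i) ^ 2 - ∑ i, l i ^ 2) := by
    have h : (Polynomial.derivative (Polynomial.derivative (aeval φ F))).eval 0
        = ∑ j, v j * ∑ i, v i * eval a (pderiv i (pderiv j F)) := by
      rw [hder F, Polynomial.derivative_sum, Polynomial.eval_finsetSum]
      simp only [Polynomial.derivative_C_mul, hder, Polynomial.eval_finsetSum,
        Polynomial.eval_mul, Polynomial.eval_C, hev0]
    rw [← h, hpoly, ← Polynomial.coeff_zero_eq_eval_zero, Polynomial.coeff_derivative,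
      Polynomial.coeff_derivative, Polynomial.coeff_C_mul, ← hc2]
    push_cast
    ring
  have hquad : star v ⬝ᵥ (Matrix.mulVec (Matrix.of fun i j : G.edgeSet =>
        -(eval a F) * eval a (pderiv i (pderiv j F))
          + s * (eval a (pderiv i F) * eval a (pderiv j F))) v)
      = (eval a F) ^ 2 * (∑ i, l i ^ 2 - (1 - s) * (∑ i, l i) ^ 2) := by
    have e1 : star v ⬝ᵥ (Matrix.mulVec (Matrix.of fun i j : G.edgeSet =>
        -(eval a F) * eval a (pderiv i (pderiv j F))
          + s * (eval a (pderiv i F) * eval a (pderiv j F))) v)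
        = -(eval a F) * (∑ j, v j * ∑ i, v i * eval a (pderiv i (pderiv j F)))
          + s * ((∑ i, v i * eval a (pderiv i F)) * ∑ i, v i * eval a (pderiv i F)) := by
      simp only [dotProduct, Matrix.mulVec, Matrix.of_apply, star_trivial]
      rw [Finset.sum_mul_sum]
      simp only [Finset.mul_sum]
      rw [Finset.sum_comm (f := fun j i => -(eval a F) * (v j * (v i * _))),
        ← Finset.sum_add_distrib]
      refine Finset.sum_congr rfl fun i _ => ?_
      rw [← Finset.sum_add_distrib]
      refine Finset.sum_congr rfl fun j _ => ?_
      ring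
    rw [e1, hd1, hd2]
    ring
  rw [hquad]
  refine mul_pos (pow_pos hFpos 2) ?_
  have hcard : (Fintype.card {v : V // v ≠ ρ} : ℝ) = r := by
    norm_cast
    simp [hV]
  have hcs : (∑ i, l i) ^ 2 ≤ r * ∑ i, l i ^ 2 := by
    have := sq_sum_le_card_mul_sum_sq (s := Finset.univ) (f := l)
    rwa [Finset.card_univ, hcard] at this
  have hpos : 0 < ∑ i, l i ^ 2 := by
    obtain ⟨i, hi⟩ := Function.ne_iff.mp hlne
    exact Finset.sum_pos' (fun i _ => sq_nonneg _)
      ⟨i, Finset.mem_univ i, sq_pos_of_ne_zero hi⟩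
  have hr0 : (0 : ℝ) < r := by
    have : 0 < r := by omega
    exact_mod_cast this
  rw [div_lt_iff₀ hr0] at hs
  -- The hypothesis on `s` says `(1 - s) * r < 1`; if `1 - s > 0`, this combines with `hcs`.
  rcases le_total (1 - s) 0 with h1s | h1s
  · nlinarith [sq_nonneg (∑ i, l i)]
  · nlinarith [mul_le_mul_of_nonneg_left hcs h1s,
      mul_pos (show 0 < 1 - (1 - s) * r by linarith) hpos]
end

section
/- Let r ≥ 2, let K_{r+1} be the complete simple graph on r+1 vertices, let N = binom(r+1, 2) be its number of edges, and let F = F_{K_{r+1}} ∈ ℝ[x_e : e an edge of K_{r+1}] be its Kirchhoff polynomial. Then the following identity of polynomials holds: det(H_F) = (−1)^{N−1}·2^{N−r}·(r−1)·F^{N−r−1}. -/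
/-!
Let `b_e` be the incidence vector of the edge `e` with the coordinate of the vertex `0` deleted, and
let `S = ∑ x_e b_e b_eᵀ` be the reduced weighted Laplacian (`lap`). The matrix-tree theorem
(`kirchhoff_eq_det_lap`) gives `F = det S`. For `K_{r+1}` the matrices `b_e b_eᵀ` form a basis of the
symmetric `r × r` matrices, so up to a linear change of variables `F` is the determinant of a generic
symmetric matrix.

Jacobi's formula, applied twice, gives `∂_e ∂_f F = det S * (v_e v_f - Q_{ef})` with
`v_e = b_eᵀ S⁻¹ b_e` and `Q_{ef} = (b_eᵀ S⁻¹ b_f)²` (`det_mul_second_derivation`, `eval_hessian`).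
Since `Q x = v` and `v ⬝ x = tr (S⁻¹ S) = r`, one has `v vᵀ - Q = -Q (1 - x vᵀ)`, whose determinant is
`(-1)^N (1 - r) det Q` (`det_hess_form`).

Finally `Q` is the Gram matrix of `(Y, Z) ↦ tr (Y S⁻¹ Z S⁻¹)` in the basis `b_e b_eᵀ`. In matrix
coordinates it factors as `P * Φ * a`, where `Φ` is the matrix of `Y ↦ S⁻¹ Y S⁻¹` on symmetric
matrices and `P`, `a` are block triangular with determinants `(-2)^(N-r)` and `(-1)^(N-r)`
(`det_sq_form`). The spectral theorem reduces `det Φ = det (S⁻¹)^(r+1)` to diagonal matrices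
(`det_congrAct_of_symm`). All this is carried out at the real points with `det S ≠ 0`, which suffices
because `F` is a nonzero polynomial.
-/

open MvPolynomial

open Matrix

/-! ### The matrix-tree theorem -/

/-- A weak form of the Cauchy–Binet formula: `det (∑ x_e b_e b_eᵀ)` is square-free and homogeneous
of degree `|m|` in the weights `x_e`. -/
lemma det_weighted_sum {R n m : Type*} [CommRing R] [Fintype n] [DecidableEq n] [Fintype m]
    [DecidableEq m] (B : n → m → R) :
    ∃ c : Finset n → R, (∀ T, T.card ≠ Fintype.card m → c T = 0) ∧ ∀ x : n → R,
      (Matrix.of fun i j => ∑ e, x e * B e i * B e j).det = ∑ T, c T * ∏ e ∈ T, x e := by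
  classical
  refine ⟨fun T => ∑ f : m → n with Function.Injective f ∧ Finset.univ.image f = T,
    (∏ i, B (f i) i) * (Matrix.of fun i j => B (f i) j).det, fun T hT => ?_, fun x => ?_⟩
  · refine Finset.sum_eq_zero fun f hf => ?_
    rw [Finset.mem_filter] at hf
    refine absurd ?_ hT
    rw [← hf.2.2, Finset.card_image_of_injective _ hf.2.1, Finset.card_univ]
  · have h1 : (Matrix.of fun i j => ∑ e, x e * B e i * B e j).det
        = detRowAlternating.toMultilinearMap fun i => ∑ e, (x e * B e i) • B e := by
      change det _ = det _
      congr 1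
      ext i j
      simp
    rw [h1, MultilinearMap.map_sum]
    simp_rw [MultilinearMap.map_smul_univ]
    simp_rw [Finset.sum_mul]
    have h2 : ∀ f : m → n, ¬ Function.Injective f →
        (∏ i, x (f i) * B (f i) i) • detRowAlternating.toMultilinearMap (fun i => B (f i)) = 0 := by
      intro f hf
      simp only [Function.Injective, not_forall] at hf
      obtain ⟨i, j, hij, hne⟩ := hf
      rw [AlternatingMap.coe_multilinearMap,
        AlternatingMap.map_eq_zero_of_eq _ _ (by simp [hij]) hne, smul_zero]
    rw [← Finset.sum_filter_add_sum_filter_not Finset.univ (fun f : m → n => Function.Injective f),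
      Finset.sum_eq_zero (s := Finset.univ.filter fun f : m → n => ¬ Function.Injective f)
        (fun f hf => h2 f (Finset.mem_filter.1 hf).2), add_zero,
      ← Finset.sum_fiberwise (Finset.univ.filter fun f : m → n => Function.Injective f)
        (fun f => Finset.univ.image f)]
    refine Finset.sum_congr rfl fun T _ => ?_
    rw [Finset.filter_filter]
    refine Finset.sum_congr rfl fun f hf => ?_
    rw [Finset.mem_filter] at hf
    rw [← hf.2.2, Finset.prod_image hf.2.1.injOn, Finset.prod_mul_distrib]
    change _ * det _ = _ * det _ * _
    rw [mul_comm (∏ i, x (f i)), mul_right_comm]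
    rfl

/-- The edges of the complete graph on the vertices `0, …, r`. -/
abbrev KEdge (r : ℕ) : Type := (⊤ : SimpleGraph (Fin (r + 1))).edgeSet

/-- The incidence vector of an edge oriented from its smaller to its larger endpoint, with the
coordinate of the vertex `0` deleted: coordinate `i` belongs to the vertex `i + 1`. -/
def inc {r : ℕ} (e : KEdge r) (i : Fin r) : ℤ :=
  (if i.succ = e.1.sup then 1 else 0) - (if i.succ = e.1.inf then 1 else 0)

/-- The weighted Laplacian of the complete graph, with the row and column of the vertex `0` deleted. -/
def lap {r : ℕ} {R : Type*} [CommRing R] (x : KEdge r → R) : Matrix (Fin r) (Fin r) R :=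
  Matrix.of fun i j => ∑ e, x e * (inc e i : R) * (inc e j : R)

/-- The coefficient of `∏ e ∈ T, x e` in `det (lap x)` is found by evaluating at the indicator
function of `T`, where no other monomial of degree `r` survives. -/
lemma det_lap_eq_sum {r : ℕ} {R : Type*} [CommRing R] (x : KEdge r → R) :
    (lap x).det = ∑ T : Finset (KEdge r), if T.card = r then
      ((lap (fun e => if e ∈ T then (1 : ℤ) else 0)).det : R) * ∏ e ∈ T, x e else 0 := by
  obtain ⟨c, hc, h⟩ := det_weighted_sum (fun (e : KEdge r) (i : Fin r) => (inc e i : R))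
  rw [Fintype.card_fin] at hc
  rw [lap, h]
  refine Finset.sum_congr rfl fun T _ => ?_
  split_ifs with hT
  · congr 1
    have h1 := h (fun e => if e ∈ T then 1 else 0)
    rw [Finset.sum_eq_single T] at h1
    · rw [Finset.prod_congr rfl (fun e he => if_pos he), Finset.prod_const_one, mul_one] at h1
      rw [← h1, Int.cast_det]
      congr 1
      ext i j
      simp [lap]
    · intro U _ hU
      by_cases hUr : U.card = r
      · have : ¬ U ⊆ T := fun hs => hU (Finset.eq_of_subset_of_card_le hs (by omega))
        obtain ⟨e, he, heT⟩ := Finset.not_subset.1 this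
        rw [Finset.prod_eq_zero he (if_neg heT), mul_zero]
      · rw [hc U hUr, zero_mul]
    · simp
  · rw [hc T hT, zero_mul]

/-- Pairing the incidence vector with a potential that vanishes at the deleted vertex. -/
lemma sum_inc_mul {r : ℕ} {R : Type*} [CommRing R] (e : KEdge r) (g : Fin (r + 1) → R)
    (h0 : g 0 = 0) : ∑ i : Fin r, (inc e i : R) * g i.succ = g e.1.sup - g e.1.inf := by
  have : ∀ v : Fin (r + 1), ∑ i : Fin r, (if i.succ = v then g i.succ else 0) = g v := by
    intro v
    induction v using Fin.cases with
    | zero => simp [h0, Fin.succ_ne_zero]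
    | succ k => simp
  simp only [inc, Int.cast_sub, Int.cast_ite, Int.cast_one, Int.cast_zero, sub_mul, ite_mul,
    one_mul, zero_mul, Finset.sum_sub_distrib, this]

lemma sup_inf_cases {r : ℕ} (e : Sym2 (Fin (r + 1))) (u v : Fin (r + 1)) (h : e = s(u, v)) :
    (e.sup = u ∧ e.inf = v) ∨ (e.sup = v ∧ e.inf = u) := by
  subst h
  rcases le_total u v with h | h <;> simp [h]

/-- For `r` edges on `r + 1` vertices, the reduced Laplacian has determinant `1` or `0` according to
whether the graph is connected. If it is, walks to `0` express the standard basis of `ℤ^r` through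
the incidence vectors, so the square incidence matrix is unimodular; if not, the indicator of the
vertices unreachable from `0` is a null vector. -/
lemma det_lap_indicator {r : ℕ} (T : Finset (KEdge r)) (hT : T.card = r)
    [Decidable (SimpleGraph.fromEdgeSet (Subtype.val '' (T : Set (KEdge r)))).Connected] :
    (lap (fun e => if e ∈ T then (1 : ℤ) else 0)).det
      = if (SimpleGraph.fromEdgeSet (Subtype.val '' (T : Set (KEdge r)))).Connected
        then 1 else 0 := by
  classical
  set G := SimpleGraph.fromEdgeSet (Subtype.val '' (T : Set (KEdge r))) with hG
  split_ifs with hconn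
  · let B : Matrix (Fin r) T ℤ := Matrix.of fun i e => inc e.1 i
    have hL : lap (fun e => if e ∈ T then (1 : ℤ) else 0) = B * Bᵀ := by
      ext i j
      simp only [lap, of_apply, mul_apply, transpose_apply, B, ite_mul, one_mul, zero_mul,
        Int.cast_id]
      rw [← Finset.sum_filter, Finset.filter_mem_eq_inter, Finset.univ_inter,
        ← Finset.sum_coe_sort]
    let δ : Fin (r + 1) → Fin r → ℤ := fun v i => if i.succ = v then 1 else 0
    have hadj : ∀ u v, G.Adj u v → δ u - δ v ∈ LinearMap.range B.mulVecLin := by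
      intro u v huv
      rw [hG, SimpleGraph.fromEdgeSet_adj] at huv
      obtain ⟨⟨e, heT, he⟩, -⟩ := huv
      have heT' : e ∈ T := heT
      have hb : (fun i => inc e i) ∈ LinearMap.range B.mulVecLin :=
        ⟨Pi.single ⟨e, heT'⟩ 1, by ext i; simp [B]⟩
      rcases sup_inf_cases e.1 u v he with ⟨h1, h2⟩ | ⟨h1, h2⟩
      · convert hb using 1
        ext i
        simp [δ, inc, h1, h2]
      · convert neg_mem hb using 1
        ext i
        simp [δ, inc, h1, h2]
    have hspan : ∀ v, δ v ∈ LinearMap.range B.mulVecLin := by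
      have : ∀ u v, G.Walk u v → δ v ∈ LinearMap.range B.mulVecLin →
          δ u ∈ LinearMap.range B.mulVecLin := by
        intro u v p
        induction p with
        | nil => exact id
        | cons h _ ih => 
          intro h'
          simpa using add_mem (hadj _ _ h) (ih h')
      intro v
      obtain ⟨p⟩ := hconn.preconnected v 0
      refine this v 0 p ?_
      have h0 : δ 0 = 0 := by
        ext i
        simp [δ, Fin.succ_ne_zero]
      exact h0 ▸ zero_mem _
    have hcol : ∀ k : Fin r, ∃ y : T → ℤ, B *ᵥ y = Pi.single k 1 := by
      intro k
      obtain ⟨y, hy⟩ := hspan k.succ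
      refine ⟨y, ?_⟩
      rw [← mulVecLin_apply, hy]
      ext i
      simp [δ, Pi.single_apply]
    choose y hy using hcol
    have hinv : B * (Matrix.of fun e k => y k e) = 1 := by
      ext i k
      have := congrFun (hy k) i
      simpa [mul_apply, mulVec, dotProduct, one_apply, Pi.single_apply] using this
    let φ : Fin r ≃ T := (Fintype.equivFinOfCardEq (by simp [hT])).symm
    have h1 : (B.submatrix id φ).det * ((Matrix.of fun e k => y k e).submatrix φ id).det = 1 := by
      rw [← det_mul, submatrix_mul_equiv, hinv]; simp
    have h2 : lap (fun e => if e ∈ T then (1 : ℤ) else 0)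
        = B.submatrix id φ * (B.submatrix id φ)ᵀ := by
      rw [hL, transpose_submatrix, submatrix_mul_equiv]; simp
    rw [h2, det_mul, det_transpose]
    have h3 : IsUnit (B.submatrix id φ).det := IsUnit.of_mul_eq_one _ h1
    exact Int.isUnit_mul_self h3
  · have hex : ∃ v, ¬ G.Reachable 0 v := by
      by_contra! h
      exact hconn ⟨fun u v => (h u).symm.trans (h v)⟩
    obtain ⟨v, hv⟩ := hex
    let g : Fin (r + 1) → ℤ := fun v => if G.Reachable 0 v then 0 else 1
    have hg0 : g 0 = 0 := by simp [g]
    refine exists_vecMul_eq_zero_iff.1 ⟨fun i => g i.succ, ?_, ?_⟩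
    · induction v using Fin.cases with
      | zero => exact absurd (SimpleGraph.Reachable.refl 0) hv
      | succ k =>
        intro h
        have := congrFun h k
        simp [g, hv] at this
    · ext j
      simp only [vecMul, dotProduct, lap, of_apply, Finset.mul_sum, Pi.zero_apply]
      rw [Finset.sum_comm]
      refine Finset.sum_eq_zero fun e _ => ?_
      have h1 := sum_inc_mul e g hg0
      have h2 : (if e ∈ T then (1 : ℤ) else 0) * (g e.1.sup - g e.1.inf) = 0 := by
        split_ifs with he
        · have hne : e.1.inf ≠ e.1.sup := by
            obtain ⟨e, hme⟩ := e
            induction e with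
            | _ a b =>
              have : a ≠ b := by simpa using hme
              rcases lt_or_gt_of_ne this with h | h <;> simp [h.le, this, this.symm]
          have hadj : G.Adj e.1.inf e.1.sup := by
            rw [hG, SimpleGraph.fromEdgeSet_adj]
            refine ⟨⟨e, he, ?_⟩, hne⟩
            induction e.1 with
            | _ a b => rcases le_total a b with h | h <;> simp [h, Sym2.eq_swap]
          have : G.Reachable 0 e.1.inf ↔ G.Reachable 0 e.1.sup :=
            ⟨fun h => h.trans hadj.reachable, fun h => h.trans hadj.reachable.symm⟩
          simp [g, this]
        · simp
      calc _ = (if e ∈ T then (1 : ℤ) else 0) * (∑ i : Fin r, (inc e i : ℤ) * g i.succ)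
            * (inc e j : ℤ) := by
            rw [Finset.mul_sum, Finset.sum_mul]
            exact Finset.sum_congr rfl fun i _ => by simp only [Int.cast_id]; ring
        _ = 0 := by
          simp only [Int.cast_id] at h1 ⊢
          rw [h1, h2, zero_mul]

/-- The matrix-tree theorem for the complete graph. -/
lemma kirchhoff_eq_det_lap (r : ℕ) :
    kirchhoff (⊤ : SimpleGraph (Fin (r + 1)))
      = (lap (fun e : KEdge r => (X e : MvPolynomial (KEdge r) ℝ))).det := by
  classical
  rw [det_lap_eq_sum, kirchhoff]
  refine Finset.sum_congr rfl fun T _ => ?_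
  by_cases hT : T.card = r
  · rw [if_pos hT, det_lap_indicator T hT]
    by_cases hc : (SimpleGraph.fromEdgeSet (Subtype.val '' (T : Set (KEdge r)))).Connected
    · rw [if_pos hc, if_pos ⟨by simpa using hT, hc⟩]; simp
    · rw [if_neg hc, if_neg (fun h => hc h.2)]; simp
  · rw [if_neg hT, if_neg (fun h => hT (by simpa using h.1))]

/-! ### Derivatives of a determinant -/

lemma derivation_prod {R ι : Type*} [CommRing R] [Algebra ℝ R] [DecidableEq ι]
    (d : Derivation ℝ R R) (s : Finset ι) (f : ι → R) :
    d (∏ i ∈ s, f i) = ∑ i ∈ s, (∏ j ∈ s.erase i, f j) * d (f i) := by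
  induction s using Finset.induction_on with
  | empty => simp
  | insert a s ha ih =>
    rw [Finset.prod_insert ha, Derivation.leibniz, ih, Finset.sum_insert ha,
      Finset.erase_insert ha, smul_eq_mul, smul_eq_mul, Finset.mul_sum, add_comm]
    congr 1
    refine Finset.sum_congr rfl fun i hi => ?_
    have hia : i ≠ a := fun h => ha (h ▸ hi)
    rw [Finset.erase_insert_of_ne hia.symm, Finset.prod_insert (by simp [ha]), mul_assoc]

/-- Jacobi's formula for an arbitrary derivation. -/
lemma derivation_det {R n : Type*} [CommRing R] [Algebra ℝ R] [Fintype n] [DecidableEq n]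
    (d : Derivation ℝ R R) (M : Matrix n n R) :
    d M.det = ∑ i, ∑ j, M.adjugate j i * d (M i j) := by
  have h1 : ∀ i, ∑ j, M.adjugate j i * d (M i j) = (M.updateRow i fun j => d (M i j)).det := by
    intro i
    rw [← cramer_transpose_apply, cramer_eq_adjugate_mulVec, ← adjugate_transpose]
    simp [mulVec, dotProduct]
  simp_rw [h1]
  rw [← det_transpose, det_apply]
  simp_rw [← det_transpose (M.updateRow _ _), det_apply]
  rw [Finset.sum_comm, map_sum]
  refine Finset.sum_congr rfl fun σ _ => ?_
  rw [← Finset.smul_sum]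
  have : ∀ a : R, d (Equiv.Perm.sign σ • a) = Equiv.Perm.sign σ • d a := by
    intro a; rcases Int.units_eq_one_or (Equiv.Perm.sign σ) with h | h <;> simp [h, Units.smul_def]
  rw [this, derivation_prod]
  congr 1
  refine Finset.sum_congr rfl fun i _ => ?_
  rw [← Finset.mul_prod_erase Finset.univ _ (Finset.mem_univ i)]
  rw [mul_comm]
  congr 1
  · simp
  · refine Finset.prod_congr rfl fun j hj => ?_
    simp [updateRow_ne (Finset.ne_of_mem_erase hj)]

/-- The second derivative of a determinant in two rank-one symmetric directions, cleared of
denominators. -/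
lemma det_mul_second_derivation {R n : Type*} [CommRing R] [Algebra ℝ R] [Fintype n]
    [DecidableEq n] (d₁ d₂ : Derivation ℝ R R) (M : Matrix n n R) (u w : n → R)
    (h₁ : ∀ i j, d₁ (M i j) = u i * u j) (h₂ : ∀ i j, d₂ (M i j) = w i * w j)
    (hw : ∀ i, d₁ (w i) = 0) :
    M.det * d₁ (d₂ M.det) = (u ⬝ᵥ M.adjugate *ᵥ u) * (w ⬝ᵥ M.adjugate *ᵥ w)
      - (w ⬝ᵥ M.adjugate *ᵥ u) * (u ⬝ᵥ M.adjugate *ᵥ w) := by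
  have quad : ∀ (N : Matrix n n R) (v v' : n → R), 
      ∑ i, ∑ j, N j i * (v i * v' j) = v' ⬝ᵥ N *ᵥ v := by
    intro N v v'
    rw [Finset.sum_comm]
    simp only [dotProduct, mulVec, Finset.mul_sum]
    exact Finset.sum_congr rfl fun _ _ => Finset.sum_congr rfl fun _ _ => by ring
  have hD₁ : d₁ M.det = u ⬝ᵥ M.adjugate *ᵥ u := by
    rw [derivation_det]; simp_rw [h₁]; exact quad _ _ _
  have hD₂ : d₂ M.det = w ⬝ᵥ M.adjugate *ᵥ w := by
    rw [derivation_det]; simp_rw [h₂]; exact quad _ _ _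
  have hmap : ∀ A B : Matrix n n R, (A * B).map d₁ = A.map d₁ * B + A * B.map d₁ := by
    intro A B
    ext i j
    simp only [map_apply, mul_apply, Matrix.add_apply, map_sum, Derivation.leibniz, smul_eq_mul,
      ← Finset.sum_add_distrib]
    exact Finset.sum_congr rfl fun _ _ => by ring
  have hM : M.map d₁ = vecMulVec u u := by ext i j; simp [h₁, vecMulVec_apply]
  -- the derivative of `adjugate M * M = det M • 1`
  have key : M.adjugate.map d₁ * M + M.adjugate * vecMulVec u u = d₁ M.det • 1 := by
    rw [← hM, ← hmap, adjugate_mul]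
    ext i j
    by_cases h : i = j <;> simp [h, one_apply]
  have key2 : M.det • M.adjugate.map d₁
      = d₁ M.det • M.adjugate - M.adjugate * vecMulVec u u * M.adjugate := by
    have := congrArg (· * M.adjugate) key
    simp only [add_mul, mul_assoc, mul_adjugate, smul_mul_assoc, one_mul] at this
    rw [eq_sub_iff_add_eq, ← this]
    simp [mul_assoc]
  have hdd : d₁ (w ⬝ᵥ M.adjugate *ᵥ w) = w ⬝ᵥ M.adjugate.map d₁ *ᵥ w := by
    simp [dotProduct, mulVec, hw, Finset.mul_sum, mul_comm (w _) (d₁ _)]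
  rw [hD₂, hdd, ← smul_eq_mul, ← dotProduct_smul, ← smul_mulVec, key2, sub_mulVec, smul_mulVec,
    dotProduct_sub, dotProduct_smul, hD₁, smul_eq_mul, ← mulVec_mulVec, ← mulVec_mulVec,
    vecMulVec_mulVec]
  simp [mulVec_smul, mul_comm]

/-! ### The congruence action on symmetric matrices -/

/-- Positions strictly above the diagonal of an `r × r` matrix. -/
abbrev PairIdx (r : ℕ) : Type := {p : Fin r × Fin r // p.1 < p.2}

/-- Coordinates on symmetric `r × r` matrices: diagonal entries and entries above the diagonal. -/
abbrev SymIdx (r : ℕ) : Type := Fin r ⊕ PairIdx r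

/-- The symmetric matrix with prescribed entries on and above the diagonal. -/
def symMat {r : ℕ} : (SymIdx r → ℝ) →ₗ[ℝ] Matrix (Fin r) (Fin r) ℝ where
  toFun y := Matrix.of fun i j =>
    if h : i < j then y (Sum.inr ⟨(i, j), h⟩)
    else if h : j < i then y (Sum.inr ⟨(j, i), h⟩) else y (Sum.inl i)
  map_add' y z := by
    ext i j
    simp only [of_apply, Matrix.add_apply, Pi.add_apply]
    split_ifs <;> rfl
  map_smul' a y := by
    ext i j
    simp only [of_apply, Matrix.smul_apply, Pi.smul_apply, RingHom.id_apply]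
    split_ifs <;> rfl

/-- The entries of a matrix on and above the diagonal. -/
def symCoord {r : ℕ} : Matrix (Fin r) (Fin r) ℝ →ₗ[ℝ] (SymIdx r → ℝ) where
  toFun M := Sum.elim (fun i => M i i) (fun p => M p.1.1 p.1.2)
  map_add' M N := by ext (i | p) <;> rfl
  map_smul' a M := by ext (i | p) <;> rfl

lemma symMat_isSymm {r : ℕ} (y : SymIdx r → ℝ) : (symMat y)ᵀ = symMat y := by
  ext i j
  simp only [symMat, LinearMap.coe_mk, AddHom.coe_mk, transpose_apply, of_apply]
  rcases lt_trichotomy i j with h | h | h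
  · simp [h, h.not_gt]
  · simp [h]
  · simp [h, h.not_gt]

lemma symCoord_symMat {r : ℕ} (y : SymIdx r → ℝ) : symCoord (symMat y) = y := by
  ext (i | ⟨⟨i, j⟩, h⟩)
  · simp [symCoord, symMat]
  · have h' : i < j := h
    simp [symCoord, symMat, h']

lemma symMat_symCoord {r : ℕ} (M : Matrix (Fin r) (Fin r) ℝ) (hM : Mᵀ = M) :
    symMat (symCoord M) = M := by
  ext i j
  have : M j i = M i j := congrFun (congrFun hM i) j
  rcases lt_trichotomy i j with h | h | h
  · simp [symCoord, symMat, h]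
  · subst h; simp [symCoord, symMat]
  · simp [symCoord, symMat, h, h.not_gt, this]

/-- The action `Y ↦ A Y Aᵀ` on symmetric matrices, in coordinates. -/
def congrAct {r : ℕ} (A : Matrix (Fin r) (Fin r) ℝ) : (SymIdx r → ℝ) →ₗ[ℝ] (SymIdx r → ℝ) where
  toFun y := symCoord (A * symMat y * Aᵀ)
  map_add' y z := by rw [map_add, mul_add, add_mul, map_add]
  map_smul' a y := by simp

lemma congrAct_apply {r : ℕ} (A : Matrix (Fin r) (Fin r) ℝ) (y : SymIdx r → ℝ) :
    congrAct A y = symCoord (A * symMat y * Aᵀ) := rfl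

lemma congrAct_mul {r : ℕ} (A B : Matrix (Fin r) (Fin r) ℝ) :
    congrAct (A * B) = congrAct A ∘ₗ congrAct B := by
  ext1 y
  ext1
  simp only [LinearMap.comp_apply, congrAct_apply]
  rw [symMat_symCoord]
  · simp [mul_assoc]
  · simp [mul_assoc, symMat_isSymm]

lemma congrAct_one {r : ℕ} : congrAct (1 : Matrix (Fin r) (Fin r) ℝ) = LinearMap.id := by
  refine LinearMap.ext fun y => ?_
  simp [congrAct_apply, symCoord_symMat]

/-- Each `d k` occurs twice in the first product and `r - 1` times in the second. -/
lemma prod_pairs {r : ℕ} (d : Fin r → ℝ) :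
    (∏ i, d i * d i) * ∏ p : PairIdx r, d p.1.1 * d p.1.2 = (∏ i, d i) ^ (r + 1) := by
  have h1 : ∏ p : PairIdx r, d p.1.1 * d p.1.2
      = ∏ i, ∏ j, if i < j then d i * d j else 1 := by
    rw [← Finset.prod_subtype (Finset.univ.filter fun p : Fin r × Fin r => p.1 < p.2) (by simp)
      (fun p => d p.1 * d p.2), Finset.prod_filter, ← Finset.univ_product_univ,
      Finset.prod_product]
  have h2 : ∏ i, ∏ j, (if i < j then d i * d j else 1)
      = ∏ i, d i ^ (r - 1) := by
    have : ∀ i j : Fin r, (if i < j then d i * d j else 1)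
        = (if i < j then d i else 1) * (if i < j then d j else 1) := by
      intro i j; split_ifs <;> simp
    simp_rw [this, Finset.prod_mul_distrib]
    rw [Finset.prod_comm (f := fun i j : Fin r => if i < j then d j else 1),
      ← Finset.prod_mul_distrib]
    refine Finset.prod_congr rfl fun i _ => ?_
    rw [← Finset.prod_filter, ← Finset.prod_filter, Finset.prod_const, Finset.prod_const,
      ← pow_add]
    congr 1
    have e1 : (Finset.univ.filter fun j : Fin r => i < j) = Finset.Ioi i := by ext; simp
    have e2 : (Finset.univ.filter fun j : Fin r => j < i) = Finset.Iio i := by ext; simp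
    rw [e1, e2, Fin.card_Ioi, Fin.card_Iio]
    have := i.2
    omega
  rw [h1, h2, ← Finset.prod_mul_distrib, ← Finset.prod_pow]
  refine Finset.prod_congr rfl fun i _ => ?_
  have := i.2
  rw [← pow_two, ← pow_add]
  congr 1
  omega

lemma det_congrAct_diagonal {r : ℕ} (d : Fin r → ℝ) :
    LinearMap.det (congrAct (diagonal d)) = (∏ i, d i) ^ (r + 1) := by
  have : congrAct (diagonal d) = toLin' (diagonal
      (Sum.elim (fun i => d i * d i) (fun p => d p.1.1 * d p.1.2) : SymIdx r → ℝ)) := by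
    refine LinearMap.ext fun y => ?_
    rw [congrAct_apply, toLin'_apply]
    ext (i | ⟨⟨i, j⟩, h⟩)
    · simp [symCoord, symMat, mulVec_diagonal]; ring
    · have h' : i < j := h
      simp [symCoord, symMat, mulVec_diagonal, h']; ring
  rw [this, LinearMap.det_toLin', det_diagonal, Fintype.prod_sum_type, ← prod_pairs]
  rfl

/-- Writing `M = U D U⁻¹` with `U` orthogonal, the contributions of `U` and `U⁻¹ = Uᵀ` cancel by
multiplicativity, which leaves the diagonal case. -/
lemma det_congrAct_of_symm {r : ℕ} (M : Matrix (Fin r) (Fin r) ℝ) (hM : Mᵀ = M) :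
    LinearMap.det (congrAct M) = M.det ^ (r + 1) := by
  have hH : M.IsHermitian := by
    rw [Matrix.IsHermitian, conjTranspose_eq_transpose_of_trivial, hM]
  obtain ⟨U, V, d, hVU, rfl⟩ : ∃ (U V : Matrix (Fin r) (Fin r) ℝ) (d : Fin r → ℝ),
      U * V = 1 ∧ M = U * diagonal d * V := by
    refine ⟨hH.eigenvectorUnitary, star (hH.eigenvectorUnitary : Matrix (Fin r) (Fin r) ℝ),
      hH.eigenvalues, by simp, ?_⟩
    exact hH.spectral_theorem
  have h1 : LinearMap.det (congrAct U) * LinearMap.det (congrAct V) = 1 := by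
    rw [← LinearMap.det_comp, ← congrAct_mul, hVU, congrAct_one, LinearMap.det_id]
  have h2 : U.det * V.det = 1 := by rw [← det_mul, hVU, det_one]
  rw [congrAct_mul, congrAct_mul, LinearMap.det_comp, LinearMap.det_comp,
    det_congrAct_diagonal, mul_right_comm, h1, det_mul, det_mul, mul_right_comm, h2, det_diagonal]
  simp

/-! ### The determinant of the Hessian form -/

/-- The reduced incidence vectors of `K_{r+1}`, indexed by `SymIdx r`; see `inc_edgeEquiv`. -/
def incVec {r : ℕ} : SymIdx r → Fin r → ℝ :=
  Sum.elim (fun i => Pi.single i 1) (fun p => Pi.single p.1.2 1 - Pi.single p.1.1 1)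

/-- The determinant of the Gram matrix of `(Y, Z) ↦ tr (Y M Z M)` in the basis `b_e b_eᵀ`. -/
lemma det_sq_form {r : ℕ} (M : Matrix (Fin r) (Fin r) ℝ) (hM : Mᵀ = M) :
    (Matrix.of fun e f : SymIdx r => (incVec e ⬝ᵥ M *ᵥ incVec f) ^ 2).det
      = 2 ^ Fintype.card (PairIdx r) * M.det ^ (r + 1) := by
  -- `P` maps the coordinates of a symmetric `Y` to the values `b_eᵀ Y b_e`; the columns of `a` are
  -- the coordinates of `b_f b_fᵀ`
  let P : Matrix (SymIdx r) (SymIdx r) ℝ := fromBlocks 1 0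
    (Matrix.of fun p k => (if p.1.1 = k then 1 else 0) + (if p.1.2 = k then 1 else 0)) ((-2 : ℝ) • 1)
  let a : Matrix (SymIdx r) (SymIdx r) ℝ := fromBlocks 1
    (Matrix.of fun k p => (if p.1.1 = k then 1 else 0) + (if p.1.2 = k then 1 else 0)) 0 (-1)
  have hP : ∀ (v : Fin r → ℝ) (e : SymIdx r),
      (P *ᵥ symCoord (vecMulVec v v)) e = (incVec e ⬝ᵥ v) ^ 2 := by
    rintro v (i | p)
    · simp [P, fromBlocks_mulVec, symCoord, incVec, vecMulVec_apply, pow_two]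
    · simp [P, fromBlocks_mulVec, symCoord, incVec, vecMulVec_apply, sub_dotProduct]
      simp [mulVec, dotProduct, add_mul, Finset.sum_add_distrib, one_apply]
      ring
  have ha : ∀ f : SymIdx r, (fun k => a k f) = symCoord (vecMulVec (incVec f) (incVec f)) := by
    rintro (i | ⟨⟨p, q⟩, h⟩)
    · ext (k | ⟨⟨k, l⟩, hk⟩)
      · simp [a, symCoord, incVec, vecMulVec_apply, one_apply, Pi.single_apply]
      · have hk' : k < l := hk
        simp [a, symCoord, incVec, vecMulVec_apply, Pi.single_apply]
        grind
    · have h' : p < q := h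
      ext (k | ⟨⟨k, l⟩, hk⟩)
      · simp [a, symCoord, incVec, vecMulVec_apply, Pi.single_apply]
        grind
      · have hk' : k < l := hk
        simp [a, symCoord, incVec, vecMulVec_apply, Pi.single_apply, one_apply]
        grind
  have hQ : (Matrix.of fun e f : SymIdx r => (incVec e ⬝ᵥ M *ᵥ incVec f) ^ 2)
      = P * LinearMap.toMatrix' (congrAct M) * a := by
    ext e f
    rw [of_apply, ← hP]
    have h1 : vecMulVec (M *ᵥ incVec f) (M *ᵥ incVec f)
        = M * vecMulVec (incVec f) (incVec f) * Mᵀ := by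
      rw [mul_vecMulVec, vecMulVec_mul, vecMul_transpose]
    have h2 : symCoord (vecMulVec (M *ᵥ incVec f) (M *ᵥ incVec f))
        = LinearMap.toMatrix' (congrAct M) *ᵥ (fun k => a k f) := by
      rw [h1, LinearMap.toMatrix'_mulVec, ha, congrAct_apply, symMat_symCoord]
      exact transpose_vecMulVec _ _
    rw [h2, mulVec_mulVec]
    rfl
  rw [hQ, det_mul, det_mul, LinearMap.det_toMatrix', det_congrAct_of_symm M hM,
    det_fromBlocks_zero₁₂, det_fromBlocks_zero₂₁]
  simp only [det_one, det_smul, det_neg, one_mul, mul_one]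
  rw [mul_right_comm, ← mul_pow]
  norm_num

/-- The matrix `v vᵀ - Q`, with `v_e = b_eᵀ S⁻¹ b_e` and `Q_{ef} = (b_eᵀ S⁻¹ b_f)²`, is a rank-one
perturbation of `-Q` with `Q x = v`. -/
lemma det_hess_form {r : ℕ} (x : SymIdx r → ℝ) (S : Matrix (Fin r) (Fin r) ℝ)
    (hS : S = ∑ e, x e • vecMulVec (incVec e) (incVec e)) (hdet : S.det ≠ 0) :
    (Matrix.of fun e f : SymIdx r => (incVec e ⬝ᵥ S⁻¹ *ᵥ incVec e) * (incVec f ⬝ᵥ S⁻¹ *ᵥ incVec f)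
        - (incVec e ⬝ᵥ S⁻¹ *ᵥ incVec f) ^ 2).det
      = (-1) ^ Fintype.card (SymIdx r) * (2 ^ Fintype.card (PairIdx r) * S⁻¹.det ^ (r + 1))
        * (1 - r) := by
  have hST : Sᵀ = S := by
    rw [hS, transpose_sum]
    simp [transpose_vecMulVec]
  have hMT : S⁻¹ᵀ = S⁻¹ := by rw [transpose_nonsing_inv, hST]
  have hu : IsUnit S.det := hdet.isUnit
  rw [← det_sq_form _ hMT]
  set M := S⁻¹ with hM
  set Q := (Matrix.of fun e f : SymIdx r => (incVec e ⬝ᵥ M *ᵥ incVec f) ^ 2) with hQ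
  let v : SymIdx r → ℝ := fun e => incVec e ⬝ᵥ M *ᵥ incVec e
  have hsymm : ∀ a b : Fin r → ℝ, a ⬝ᵥ M *ᵥ b = b ⬝ᵥ M *ᵥ a := by
    intro a b
    rw [dotProduct_mulVec, ← mulVec_transpose, hMT, dotProduct_comm]
  have hform : ∀ a b : Fin r → ℝ, ∑ f, x f * (a ⬝ᵥ incVec f) * (incVec f ⬝ᵥ b) = a ⬝ᵥ S *ᵥ b := by
    intro a b
    rw [hS, sum_mulVec, dotProduct_sum]
    refine Finset.sum_congr rfl fun f _ => ?_
    rw [smul_mulVec, vecMulVec_mulVec]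
    simp [dotProduct_smul]
    ring
  have hQx : Q *ᵥ x = v := by
    ext e
    have := hform (M *ᵥ incVec e) (M *ᵥ incVec e)
    rw [mulVec_mulVec, hM, mul_nonsing_inv _ hu, one_mulVec, ← hM, dotProduct_comm] at this
    simp only [v]
    rw [← this]
    simp only [mulVec, dotProduct, hQ, of_apply]
    refine Finset.sum_congr rfl fun f _ => ?_
    change (incVec e ⬝ᵥ M *ᵥ incVec f) ^ 2 * x f
      = x f * ((M *ᵥ incVec e) ⬝ᵥ incVec f) * (incVec f ⬝ᵥ M *ᵥ incVec e)
    rw [dotProduct_comm (M *ᵥ incVec e), hsymm (incVec e)]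
    ring
  have hvx : v ⬝ᵥ x = r := by
    have h1 : (M * S).trace = v ⬝ᵥ x := by
      rw [hS, Matrix.mul_sum, trace_sum]
      simp only [dotProduct, v]
      refine Finset.sum_congr rfl fun f _ => ?_
      rw [Matrix.mul_smul, trace_smul, mul_vecMulVec, trace_vecMulVec, dotProduct_comm, smul_eq_mul,
        mul_comm]
      rfl
    rw [← h1, hM, nonsing_inv_mul _ hu, trace_one, Fintype.card_fin]
  have hfac : (Matrix.of fun e f : SymIdx r => (incVec e ⬝ᵥ M *ᵥ incVec e)
        * (incVec f ⬝ᵥ M *ᵥ incVec f) - (incVec e ⬝ᵥ M *ᵥ incVec f) ^ 2)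
      = -(Q * (1 - replicateCol Unit x * replicateRow Unit v)) := by
    rw [mul_sub, mul_one, neg_sub, ← Matrix.mul_assoc, ← replicateCol_mulVec, hQx]
    ext e f
    simp [mul_apply, hQ, v]
  rw [hfac, det_neg, det_mul, det_one_sub_mul_comm,
    det_unique (1 - replicateRow Unit v * replicateCol Unit x)]
  have : (replicateRow Unit v * replicateCol Unit x) default default = r := by
    rw [← hvx]; rfl
  rw [Matrix.sub_apply, this]
  simp [mul_assoc]

/-! ### The Hessian of the Kirchhoff polynomial -/

/-- The edges of `K_{r+1}` indexed by coordinates on symmetric matrices: `inl i` is the edge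
`{0, i + 1}` and `inr (i, j)` is the edge `{i + 1, j + 1}`. -/
noncomputable def edgeEquiv (r : ℕ) : SymIdx r ≃ KEdge r :=
  Equiv.ofBijective
    (Sum.elim (fun i => ⟨s(0, i.succ), by simp [(Fin.succ_ne_zero i).symm]⟩)
      (fun p => ⟨s(p.1.1.succ, p.1.2.succ), by simpa using p.2.ne⟩)) <| by
    constructor
    · rintro (i | ⟨⟨i, j⟩, h⟩) (k | ⟨⟨k, l⟩, h'⟩) heq
      · simpa [Fin.succ_ne_zero] using heq
      · simp [(Fin.succ_ne_zero _).symm] at heq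
      · simp [Fin.succ_ne_zero] at heq
      · simp only [Sum.elim_inr, Subtype.mk.injEq, Sym2.eq_iff, Fin.succ_inj] at heq
        simp only at h h'
        grind
    · rintro ⟨e, he⟩
      induction e with
      | _ a b =>
        have hab : a ≠ b := by simpa using he
        rcases Fin.eq_zero_or_eq_succ a with rfl | ⟨i, rfl⟩
        · rcases Fin.eq_zero_or_eq_succ b with rfl | ⟨j, rfl⟩
          · exact absurd rfl hab
          · exact ⟨Sum.inl j, rfl⟩
        · rcases Fin.eq_zero_or_eq_succ b with rfl | ⟨j, rfl⟩
          · exact ⟨Sum.inl i, Subtype.ext Sym2.eq_swap⟩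
          · have hij : i ≠ j := fun h => hab (h ▸ rfl)
            rcases lt_or_gt_of_ne hij with h | h
            · exact ⟨Sum.inr ⟨(i, j), h⟩, rfl⟩
            · exact ⟨Sum.inr ⟨(j, i), h⟩, Subtype.ext Sym2.eq_swap⟩

lemma inc_edgeEquiv {r : ℕ} (e : SymIdx r) :
    (fun i => (inc (edgeEquiv r e) i : ℝ)) = incVec e := by
  ext i
  rcases e with k | ⟨⟨k, l⟩, h⟩
  · have he : (edgeEquiv r (Sum.inl k)).1 = s(0, k.succ) := rfl
    simp [inc, he, incVec, Pi.single_apply, Fin.succ_ne_zero]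
  · have h' : k < l := h
    have he : (edgeEquiv r (Sum.inr ⟨(k, l), h⟩)).1 = s(k.succ, l.succ) := rfl
    simp [inc, he, incVec, Pi.single_apply, h'.le]

lemma lap_eq_sum {r : ℕ} (y : KEdge r → ℝ) :
    lap y = ∑ e, y (edgeEquiv r e) • vecMulVec (incVec e) (incVec e) := by
  ext i j
  simp only [lap, of_apply, Matrix.sum_apply, Matrix.smul_apply, vecMulVec_apply, smul_eq_mul,
    ← inc_edgeEquiv]
  rw [← (edgeEquiv r).sum_comp]
  simp only [mul_assoc]

lemma map_lap {r : ℕ} (y : KEdge r → ℝ) :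
    (eval y).mapMatrix (lap fun e : KEdge r => (X e : MvPolynomial (KEdge r) ℝ)) = lap y := by
  ext i j
  simp [lap]

lemma eval_kirchhoff_s3 {r : ℕ} (y : KEdge r → ℝ) :
    eval y (kirchhoff (⊤ : SimpleGraph (Fin (r + 1)))) = (lap y).det := by
  rw [kirchhoff_eq_det_lap, RingHom.map_det, map_lap]

lemma kirchhoff_ne_zero (r : ℕ) : kirchhoff (⊤ : SimpleGraph (Fin (r + 1))) ≠ 0 := by
  intro h
  -- the star at the vertex `0` has reduced Laplacian `1`
  let y : KEdge r → ℝ := fun e => Sum.elim (fun _ => 1) (fun _ => 0) ((edgeEquiv r).symm e)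
  have h1 : lap y = 1 := by
    rw [lap_eq_sum]
    ext i j
    simp [y, Matrix.sum_apply, incVec, vecMulVec_apply, Pi.single_apply, one_apply]
  have h2 := eval_kirchhoff_s3 y
  rw [h, h1] at h2
  simp at h2

/-- With `S = lap y` and `b_e` the incidence vectors, the Hessian of `F` at `y` has entries
`det S * ((b_eᵀ S⁻¹ b_e) (b_fᵀ S⁻¹ b_f) - (b_eᵀ S⁻¹ b_f)²)`. -/
lemma eval_hessian {r : ℕ} (y : KEdge r → ℝ) (hy : (lap y).det ≠ 0) (e f : SymIdx r) :
    eval y (pderiv (edgeEquiv r e) (pderiv (edgeEquiv r f)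
        (kirchhoff (⊤ : SimpleGraph (Fin (r + 1))))))
      = (lap y).det * ((incVec e ⬝ᵥ (lap y)⁻¹ *ᵥ incVec e) * (incVec f ⬝ᵥ (lap y)⁻¹ *ᵥ incVec f)
        - (incVec e ⬝ᵥ (lap y)⁻¹ *ᵥ incVec f) ^ 2) := by
  have hd : ∀ (g : KEdge r) (i j : Fin r),
      pderiv g (lap (fun e : KEdge r => (X e : MvPolynomial (KEdge r) ℝ)) i j)
        = (inc g i : MvPolynomial (KEdge r) ℝ) * (inc g j : MvPolynomial (KEdge r) ℝ) := by
    intro g i j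
    simp [lap, pderiv_X, Pi.single_apply]
    exact mul_comm _ _
  have h := congrArg (eval y) (det_mul_second_derivation (pderiv (edgeEquiv r e))
    (pderiv (edgeEquiv r f)) (lap fun e : KEdge r => (X e : MvPolynomial (KEdge r) ℝ))
    _ _ (hd _) (hd _) (fun i => by simp))
  have hadj : (lap y).adjugate = (lap y).det • (lap y)⁻¹ := by
    rw [inv_def, smul_smul, Ring.inverse_eq_inv', mul_inv_cancel₀ hy, one_smul]
  have hST : (lap y)⁻¹ᵀ = (lap y)⁻¹ := by
    rw [transpose_nonsing_inv, lap_eq_sum, transpose_sum]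
    simp [transpose_vecMulVec]
  have hsymm : ∀ a b : Fin r → ℝ, a ⬝ᵥ (lap y)⁻¹ *ᵥ b = b ⬝ᵥ (lap y)⁻¹ *ᵥ a := by
    intro a b
    rw [dotProduct_mulVec, ← mulVec_transpose, hST, dotProduct_comm]
  have hinc : ∀ g : SymIdx r, (⇑(eval y) ∘ fun i =>
      (inc (edgeEquiv r g) i : MvPolynomial (KEdge r) ℝ)) = incVec g := by
    intro g
    rw [← inc_edgeEquiv]
    ext i
    simp
  have hq : ∀ g g' : SymIdx r, eval y ((fun i =>
      (inc (edgeEquiv r g) i : MvPolynomial (KEdge r) ℝ)) ⬝ᵥ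
      (lap fun e : KEdge r => (X e : MvPolynomial (KEdge r) ℝ)).adjugate *ᵥ fun i =>
      (inc (edgeEquiv r g') i : MvPolynomial (KEdge r) ℝ))
        = (lap y).det * (incVec g ⬝ᵥ (lap y)⁻¹ *ᵥ incVec g') := by
    intro g g'
    have h1 : (⇑(eval y) ∘ ((lap fun e : KEdge r => (X e : MvPolynomial (KEdge r) ℝ)).adjugate
        *ᵥ fun i => (inc (edgeEquiv r g') i : MvPolynomial (KEdge r) ℝ)))
        = (lap y).adjugate *ᵥ incVec g' := by
      ext i
      rw [Function.comp_apply, RingHom.map_mulVec, hinc, ← map_lap y, ← RingHom.map_adjugate]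
      rfl
    rw [RingHom.map_dotProduct, hinc, h1, hadj, smul_mulVec, dotProduct_smul, smul_eq_mul]
  rw [← kirchhoff_eq_det_lap, map_mul, eval_kirchhoff_s3, map_sub, map_mul, map_mul, hq, hq, hq, hq,
    hsymm (incVec f) (incVec e)] at h
  apply mul_left_cancel₀ hy
  rw [h]
  ring

/-- for the complete graph `K_{r+1}` (`r ≥ 2`) with `N = (r+1 choose 2)` edges
and Kirchhoff polynomial `F`, one has the polynomial identity
`det H_F = (-1)^(N-1) · 2^(N-r) · (r-1) · F^(N-r-1)`. -/
theorem hessian_det_kirchhoff_completeGraph (r N : ℕ) (hr : 2 ≤ r)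
    (hN : N = Nat.choose (r + 1) 2) :
    Matrix.det (Matrix.of fun i j : (⊤ : SimpleGraph (Fin (r + 1))).edgeSet =>
        pderiv i (pderiv j (kirchhoff (⊤ : SimpleGraph (Fin (r + 1))))))
      = C ((-1 : ℝ) ^ (N - 1) * 2 ^ (N - r) * ((r : ℝ) - 1))
          * (kirchhoff (⊤ : SimpleGraph (Fin (r + 1)))) ^ (N - r - 1) := by
  -- it suffices to compare values at the real points where `F` does not vanish
  apply mul_left_cancel₀ (kirchhoff_ne_zero r)
  refine MvPolynomial.funext fun y => ?_
  rw [map_mul, map_mul, eval_kirchhoff_s3]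
  by_cases hy : (lap y).det = 0
  · rw [hy, zero_mul, zero_mul]
  congr 1
  have hcard : Fintype.card (SymIdx r) = N := by
    rw [Fintype.card_congr (edgeEquiv r), hN, ← SimpleGraph.edgeFinset_card,
      SimpleGraph.card_edgeFinset_top_eq_card_choose_two, Fintype.card_fin]
  have hsum : r + Fintype.card (PairIdx r) = N := by
    rw [← hcard, Fintype.card_sum, Fintype.card_fin]
  have hpos : 0 < Fintype.card (PairIdx r) := by
    have h1 : 0 < Nat.choose r 2 := Nat.choose_pos hr
    have h2 : Nat.choose (r + 1) 2 = Nat.choose r 1 + Nat.choose r 2 := Nat.choose_succ_succ r 1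
    rw [Nat.choose_one_right] at h2
    omega
  have hH : (eval y).mapMatrix (Matrix.of fun i j : KEdge r =>
        pderiv i (pderiv j (kirchhoff (⊤ : SimpleGraph (Fin (r + 1))))))
      = ((lap y).det • Matrix.of fun e f : SymIdx r =>
          (incVec e ⬝ᵥ (lap y)⁻¹ *ᵥ incVec e) * (incVec f ⬝ᵥ (lap y)⁻¹ *ᵥ incVec f)
          - (incVec e ⬝ᵥ (lap y)⁻¹ *ᵥ incVec f) ^ 2).submatrix
        (edgeEquiv r).symm (edgeEquiv r).symm := by
    ext i j
    have := eval_hessian y hy ((edgeEquiv r).symm i) ((edgeEquiv r).symm j)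
    simpa using this
  rw [RingHom.map_det, hH, det_submatrix_equiv_self, det_smul,
    det_hess_form (fun e => y (edgeEquiv r e)) _ (lap_eq_sum y) hy, hcard, map_mul, eval_C, map_pow,
    eval_kirchhoff_s3, det_nonsing_inv, Ring.inverse_eq_inv']
  obtain ⟨o, ho⟩ := Nat.exists_eq_add_of_lt hpos
  rw [ho] at hsum ⊢
  have e1 : N = (r + 1) + o := by omega
  have e2 : N - r - 1 = o := by omega
  have e3 : N - r = o + 1 := by omega
  have e4 : N - 1 = r + o := by omega
  rw [e2, e3, e4, e1, pow_add (lap y).det]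
  have h3 : (lap y).det ^ (r + 1) * (lap y).det⁻¹ ^ (r + 1) = 1 := by
    rw [← mul_pow, mul_inv_cancel₀ hy, one_pow]
  have h4 : (-1 : ℝ) ^ (r + 1 + o) = - (-1) ^ (r + o) := by
    rw [add_right_comm, pow_succ]; ring
  rw [h4, zero_add]
  linear_combination ((-1 : ℝ) ^ (r + o) * 2 ^ (o + 1) * ((r : ℝ) - 1) * (lap y).det ^ o) * h3
end

section
/- Let F ∈ ℝ[x_1,…,x_n] be a nonzero homogeneous polynomial of degree r ≥ 2 all of whose coefficients are nonnegative, and let a ∈ (ℝ_{>0})^n. If F is strictly log-concave at a, i.e., the matrix (−F·H_F + (∇F)ᵀ(∇F)) evaluated at a is positive definite, then the Hessian matrix H_F evaluated at a has exactly n−1 negative eigenvalues and exactly one positive eigenvalue; in particular (−1)^{n−1}·det(H_F)(a) > 0. -/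
/-!
Write `f = F(a)`, `g = ∇F(a)` and `H = H_F(a)`. Nonnegativity of the coefficients gives `f > 0`.
Euler's identity for `∂ⱼF` and for `F` gives `aᵀ H = (r - 1) g` and `g · a = r f`, so
`aᵀ H a = r (r - 1) f > 0`. On the hyperplane `g · v = 0`, the strict log-concavity form reduces
to `-f vᵀ H v`, so `H` is negative definite there.

A real symmetric matrix that takes a positive value and is negative definite on a hyperplane has
exactly one positive eigenvalue and all others negative: two orthonormal eigenvectors with
nonnegative eigenvalues would span a plane meeting the hyperplane, and if no eigenvalue were
positive the form would be nonpositive (`existsUnique_pos_eigenvalue`). The sign of the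
determinant follows since it is the product of the eigenvalues.
-/

open MvPolynomial

open Matrix

lemma eval_pos_of_coeff_nonneg {n : ℕ} (F : MvPolynomial (Fin n) ℝ) (hF0 : F ≠ 0)
    (hcoeff : ∀ m : (Fin n) →₀ ℕ, 0 ≤ F.coeff m) (a : Fin n → ℝ) (ha : ∀ i, 0 < a i) :
    0 < eval a F := by
  rw [eval_eq']
  refine Finset.sum_pos (fun d hd => ?_) (by simpa using hF0)
  exact mul_pos (lt_of_le_of_ne (hcoeff d) (Ne.symm (mem_support_iff.mp hd)))
    (Finset.prod_pos fun i _ => pow_pos (ha i) _)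

lemma euler_eval {n r : ℕ} {F : MvPolynomial (Fin n) ℝ} (hhom : F.IsHomogeneous r)
    (a : Fin n → ℝ) : ∑ i, a i * eval a (pderiv i F) = r * eval a F := by
  simpa using congrArg (eval a) hhom.sum_X_mul_pderiv

lemma dotProduct_mulVec_nonpos_of_eigenvalues_nonpos {n : ℕ} {H : Matrix (Fin n) (Fin n) ℝ}
    (hH : H.IsHermitian) (h : ∀ i, hH.eigenvalues i ≤ 0) (x : Fin n → ℝ) :
    x ⬝ᵥ (H *ᵥ x) ≤ 0 := by
  have hD : (diagonal fun i => -hH.eigenvalues i).PosSemidef :=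
    PosSemidef.diagonal fun i => by simpa using h i
  have hP := (hD.mul_mul_conjTranspose_same
    (hH.eigenvectorUnitary : Matrix (Fin n) (Fin n) ℝ)).dotProduct_mulVec_nonneg x
  have hE : (hH.eigenvectorUnitary : Matrix (Fin n) (Fin n) ℝ) *
      (diagonal fun i => -hH.eigenvalues i) *
      (hH.eigenvectorUnitary : Matrix (Fin n) (Fin n) ℝ)ᴴ = -H := by
    have hs := hH.spectral_theorem
    rw [Unitary.conjStarAlgAut_apply] at hs
    have hd : (diagonal fun i => -hH.eigenvalues i) =
        -diagonal ((RCLike.ofReal : ℝ → ℝ) ∘ hH.eigenvalues) := by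
      rw [← diagonal_neg]; rfl
    rw [hd, mul_neg, neg_mul]
    exact congrArg Neg.neg hs.symm
  rw [hE] at hP
  simpa [neg_mulVec] using hP

/-- A symmetric form that is positive somewhere and negative definite on the hyperplane
orthogonal to `g` has exactly one positive eigenvalue, all others being negative. -/
lemma existsUnique_pos_eigenvalue {n : ℕ} {H : Matrix (Fin n) (Fin n) ℝ}
    (hH : H.IsHermitian) (g a : Fin n → ℝ) (hpos : 0 < a ⬝ᵥ (H *ᵥ a))
    (hneg : ∀ v, v ≠ 0 → g ⬝ᵥ v = 0 → v ⬝ᵥ (H *ᵥ v) < 0) :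
    ∃ k, 0 < hH.eigenvalues k ∧ ∀ i, i ≠ k → hH.eigenvalues i < 0 := by
  have hex : ∃ k, 0 < hH.eigenvalues k := by
    by_contra! hc
    exact absurd hpos (dotProduct_mulVec_nonpos_of_eigenvalues_nonpos hH hc a).not_gt
  obtain ⟨k, hk⟩ := hex
  refine ⟨k, hk, fun i hik => ?_⟩
  by_contra! hi
  set u : Fin n → ℝ := ⇑(hH.eigenvectorBasis i) with hu
  set w : Fin n → ℝ := ⇑(hH.eigenvectorBasis k) with hw
  have hip : ∀ p q, (⇑(hH.eigenvectorBasis p) : Fin n → ℝ) ⬝ᵥ ⇑(hH.eigenvectorBasis q) =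
      if q = p then 1 else 0 := fun p q => by
    have := orthonormal_iff_ite.mp hH.eigenvectorBasis.orthonormal q p
    rw [EuclideanSpace.inner_eq_star_dotProduct] at this
    simpa using this
  have huu : u ⬝ᵥ u = 1 := by simp [hu, hip]
  have hww : w ⬝ᵥ w = 1 := by simp [hw, hip]
  have huw : u ⬝ᵥ w = 0 := by simp [hu, hw, hip, Ne.symm hik]
  have hwu : w ⬝ᵥ u = 0 := by simp [hu, hw, hip, hik]
  have hHu : H *ᵥ u = hH.eigenvalues i • u := hH.mulVec_eigenvectorBasis i
  have hHw : H *ᵥ w = hH.eigenvalues k • w := hH.mulVec_eigenvectorBasis k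
  by_cases hgw : g ⬝ᵥ w = 0
  · have hw0 : w ≠ 0 := by
      intro h0; rw [h0] at hww; simp at hww
    have := hneg w hw0 hgw
    rw [hHw, dotProduct_smul, hww, smul_eq_mul] at this
    linarith
  · -- the combination of `u` and `w` lying in the hyperplane
    have hv0 : (g ⬝ᵥ w) • u - (g ⬝ᵥ u) • w ≠ 0 := by
      intro h0
      have h1 := congrArg (fun x => u ⬝ᵥ x) h0
      simp only [dotProduct_sub, dotProduct_smul, huu, huw, dotProduct_zero, smul_eq_mul] at h1
      exact hgw (by linarith)
    have := hneg _ hv0 (by simp only [dotProduct_sub, dotProduct_smul, smul_eq_mul]; ring)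
    simp only [mulVec_sub, mulVec_smul, hHu, hHw, dotProduct_sub, sub_dotProduct, dotProduct_smul,
      smul_dotProduct, huu, hww, huw, hwu, smul_eq_mul] at this
    nlinarith [mul_nonneg (sq_nonneg (g ⬝ᵥ w)) hi, mul_nonneg (sq_nonneg (g ⬝ᵥ u)) hk.le]

/-- if a nonzero homogeneous polynomial `F` of degree `r ≥ 2` with nonnegative
coefficients is strictly log-concave at a point `a` of the open positive orthant (i.e.
`(-F·H_F + (∇F)ᵀ(∇F))(a)` is positive definite), then the Hessian `H_F(a)` has exactly `n - 1`
negative eigenvalues and exactly one positive eigenvalue; in particular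
`(-1)^(n-1)·det(H_F)(a) > 0`. -/
theorem hessian_signature_of_strictly_logConcave (n r : ℕ) (hr : 2 ≤ r)
    (F : MvPolynomial (Fin n) ℝ) (hF0 : F ≠ 0) (hhom : F.IsHomogeneous r)
    (hcoeff : ∀ m : (Fin n) →₀ ℕ, 0 ≤ F.coeff m)
    (a : Fin n → ℝ) (ha : ∀ i, 0 < a i)
    (hpd : (Matrix.of fun i j : Fin n =>
        -(eval a F) * eval a (pderiv i (pderiv j F))
          + eval a (pderiv i F) * eval a (pderiv j F)).PosDef)
    (H : Matrix (Fin n) (Fin n) ℝ)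
    (hH : H = Matrix.of fun i j => eval a (pderiv i (pderiv j F))) :
    (∃ hherm : H.IsHermitian,
      (Finset.univ.filter fun i => hherm.eigenvalues i < 0).card = n - 1 ∧
      (Finset.univ.filter fun i => 0 < hherm.eigenvalues i).card = 1) ∧
    0 < (-1 : ℝ) ^ (n - 1) * H.det := by
  have hf := eval_pos_of_coeff_nonneg F hF0 hcoeff a ha
  set f := eval a F with hfdef
  set g : Fin n → ℝ := fun i => eval a (pderiv i F) with hg
  have hHij : ∀ i j, H i j = eval a (pderiv i (pderiv j F)) := fun i j => by rw [hH]; rfl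
  -- the symmetry of the log-concavity matrix forces that of `H`, since `f ≠ 0`
  have hherm : H.IsHermitian := by
    ext i j
    have h := hpd.isHermitian.apply i j
    simp only [of_apply, star_trivial] at h
    rw [conjTranspose_apply, star_trivial, hHij, hHij]
    refine mul_left_cancel₀ hf.ne' ?_
    linarith
  have hM : (Matrix.of fun i j : Fin n => -f * eval a (pderiv i (pderiv j F))
      + eval a (pderiv i F) * eval a (pderiv j F)) = (-f) • H + vecMulVec g g := by
    ext i j
    simp [hHij, vecMulVec_apply, hg]
  rw [hM] at hpd
  have hneg : ∀ v, v ≠ 0 → g ⬝ᵥ v = 0 → v ⬝ᵥ (H *ᵥ v) < 0 := by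
    intro v hv hgv
    have h := hpd.dotProduct_mulVec_pos hv
    rw [add_mulVec, vecMulVec_mulVec, hgv, smul_mulVec] at h
    simp at h
    nlinarith
  have hpos : 0 < a ⬝ᵥ (H *ᵥ a) := by
    have h1 : a ᵥ* H = ((r - 1 : ℕ) : ℝ) • g := by
      ext j
      simp only [vecMul, dotProduct, hHij, Pi.smul_apply, smul_eq_mul, hg]
      exact euler_eval (hhom.pderiv (i := j)) a
    have h2 : g ⬝ᵥ a = r * f := by
      rw [dotProduct_comm]
      exact euler_eval hhom a
    rw [dotProduct_mulVec, h1, smul_dotProduct, h2, smul_eq_mul]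
    have : 0 < r - 1 := by omega
    have : 0 < r := by omega
    positivity
  obtain ⟨k, hk, hk'⟩ := existsUnique_pos_eigenvalue hherm g a hpos hneg
  have hset_neg : (Finset.univ.filter fun i => hherm.eigenvalues i < 0) =
      Finset.univ.erase k := by
    ext i
    by_cases h : i = k
    · simp [h, hk.le]
    · simp [h, hk' i h]
  have hset_pos : (Finset.univ.filter fun i => 0 < hherm.eigenvalues i) = {k} := by
    ext i
    by_cases h : i = k
    · simp [h, hk]
    · simp [h, (hk' i h).le]
  have hcard : (Finset.univ.erase k : Finset (Fin n)).card = n - 1 := by simp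
  refine ⟨⟨hherm, by rw [hset_neg, hcard], by rw [hset_pos, Finset.card_singleton]⟩, ?_⟩
  have hdet : H.det = ∏ i, hherm.eigenvalues i := by simpa using hherm.det_eq_prod_eigenvalues
  rw [hdet, ← Finset.mul_prod_erase _ _ (Finset.mem_univ k), mul_left_comm, ← hcard,
    ← Finset.prod_const, ← Finset.prod_mul_distrib]
  refine mul_pos hk (Finset.prod_pos fun i hi => ?_)
  have := hk' i (Finset.ne_of_mem_erase hi)
  linarith
end

section
/- Let F ∈ ℝ[x_1,…,x_N] be a multi-affine homogeneous polynomial of degree r ≥ 3 all of whose nonzero coefficients are positive, let k be an integer with 0 ≤ k ≤ N−r, and let I ⊆ {k+1,…,N}. Assume that F is strictly homogeneous log-concave at every point of the cone C^N_{I>0} = { z ∈ ℝ^N_{≥0} : z_i > 0 for all i ∈ I }, and assume that each of the polynomials ∂F/∂x_1, ∂(F|_{x_1=0})/∂x_2, …, ∂(F|_{x_1=⋯=x_{k−1}=0})/∂x_k is not identically zero. Then the polynomial F|_{x_1=⋯=x_k=0} ∈ ℝ[x_{k+1},…,x_N] is strictly homogeneous log-concave at every point of C^{N−k}_{I>0}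 = { z ∈ ℝ^{N−k}_{≥0} : z_i > 0 for all i ∈ I }. -/
/-!
Extending a point `z` of the smaller cone by zeros gives a point `a` of the cone `C^N_{I>0}`,
because `I` only contains indices `≥ k`. Setting `x_1 = ⋯ = x_k = 0` commutes with differentiating
in the remaining variables (`pderiv_aeval_zero_lt`), so the matrix attached to the restricted
polynomial at `z` is a principal submatrix of the matrix attached to `F` at `a`
(`eval_aeval_zero_lt`), and principal submatrices of positive definite matrices are positive
definite.
-/

open MvPolynomial

theorem pderiv_aeval_zero_lt {N : ℕ} (k : ℕ) (i : Fin N) (hi : k ≤ (i : ℕ))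
    (G : MvPolynomial (Fin N) ℝ) :
    pderiv i (aeval (fun j : Fin N => if (j : ℕ) < k then (0 : MvPolynomial (Fin N) ℝ) else X j) G)
      = aeval (fun j : Fin N => if (j : ℕ) < k then (0 : MvPolynomial (Fin N) ℝ) else X j)
          (pderiv i G) := by
  induction G using MvPolynomial.induction_on with
  | C c => simp [algebraMap_eq]
  | add p q hp hq => simp only [map_add, hp, hq]
  | mul_X p j hp =>
    have hX : pderiv i (if (j : ℕ) < k then (0 : MvPolynomial (Fin N) ℝ) else X j)
        = aeval (fun j : Fin N => if (j : ℕ) < k then (0 : MvPolynomial (Fin N) ℝ) else X j)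
            (pderiv i (X j : MvPolynomial (Fin N) ℝ)) := by
      by_cases hij : j = i
      · subst hij
        simp [Nat.not_lt.mpr hi]
      · rw [pderiv_X_of_ne hij, map_zero]
        split_ifs
        · simp
        · exact pderiv_X_of_ne hij
    rw [map_mul, Derivation.leibniz, Derivation.leibniz, hp, aeval_X, hX]
    simp only [smul_eq_mul, map_add, map_mul, aeval_X]

theorem eval_aeval_zero_lt {N : ℕ} (k : ℕ) (a : Fin N → ℝ) (ha : ∀ j : Fin N, (j : ℕ) < k → a j = 0)
    (G : MvPolynomial (Fin N) ℝ) :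
    eval a
      (aeval (fun j : Fin N => if (j : ℕ) < k then (0 : MvPolynomial (Fin N) ℝ) else X j) G)
      = eval a G := by
  induction G using MvPolynomial.induction_on with
  | C c => simp [algebraMap_eq]
  | add p q hp hq => simp only [map_add, hp, hq]
  | mul_X p j hp =>
    rw [map_mul, map_mul, map_mul, hp, aeval_X, eval_X]
    split_ifs with h
    · simp [ha j h]
    · simp

/-- let `F` be a multi-affine homogeneous polynomial of degree `r ≥ 3` in `N`
variables with nonnegative coefficients, `0 ≤ k ≤ N - r`, and `I` a set of indices `≥ k`
(variables are indexed by `Fin N`, so `x_1,…,x_k` correspond to indices `0,…,k-1`).  If `F` is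
strictly homogeneous log-concave at every point of the cone `C^N_{I>0}` and the iterated partial
derivatives `∂F/∂x_1, ∂(F|_{x_1=0})/∂x_2, …, ∂(F|_{x_1=⋯=x_{k-1}=0})/∂x_k` are all nonzero, then
`F|_{x_1=⋯=x_k=0}`, as a polynomial in the remaining `N - k` variables, is strictly homogeneous
log-concave at every point of `C^{N-k}_{I>0}`. -/
theorem restriction_strictly_homog_logConcave (N r k : ℕ) (hr : 3 ≤ r)
    (hk : k ≤ N - r)
    (F : MvPolynomial (Fin N) ℝ) (hhom : F.IsHomogeneous r)
    (haff : ∀ i, F.degreeOf i ≤ 1)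
    (hcoeff : ∀ m : (Fin N) →₀ ℕ, 0 ≤ F.coeff m)
    (I : Finset (Fin N)) (hI : ∀ i ∈ I, k ≤ (i : ℕ))
    (Fz : ℕ → MvPolynomial (Fin N) ℝ)
    (hFz : ∀ m : ℕ, Fz m = aeval (fun i : Fin N => if (i : ℕ) < m then 0 else X i) F)
    (hconc : ∀ a : Fin N → ℝ, (∀ i, 0 ≤ a i) → (∀ i ∈ I, 0 < a i) →
      ∀ s : ℝ, ((r : ℝ) - 1) / (r : ℝ) < s →
        (Matrix.of fun i j : Fin N =>
          -(eval a F) * eval a (pderiv i (pderiv j F))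
            + s * (eval a (pderiv i F) * eval a (pderiv j F))).PosDef)
    (hne : ∀ (j : ℕ) (hj : j < k) (hjN : j < N), pderiv (⟨j, hjN⟩ : Fin N) (Fz j) ≠ 0) :
    ∀ z : {i : Fin N // k ≤ (i : ℕ)} → ℝ,
      (∀ i, 0 ≤ z i) → (∀ i : {i : Fin N // k ≤ (i : ℕ)}, i.1 ∈ I → 0 < z i) →
      ∀ s : ℝ, ((r : ℝ) - 1) / (r : ℝ) < s →
        (Matrix.of fun i j : {i : Fin N // k ≤ (i : ℕ)} =>
          -(eval (fun i : Fin N => if h : k ≤ (i : ℕ) then z ⟨i, h⟩ else 0) (Fz k))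
              * eval (fun i : Fin N => if h : k ≤ (i : ℕ) then z ⟨i, h⟩ else 0)
                  (pderiv i.1 (pderiv j.1 (Fz k)))
            + s * (eval (fun i : Fin N => if h : k ≤ (i : ℕ) then z ⟨i, h⟩ else 0)
                    (pderiv i.1 (Fz k))
                * eval (fun i : Fin N => if h : k ≤ (i : ℕ) then z ⟨i, h⟩ else 0)
                    (pderiv j.1 (Fz k)))).PosDef := by
  intro z hz hzI s hs
  set a : Fin N → ℝ := fun i : Fin N => if h : k ≤ (i : ℕ) then z ⟨i, h⟩ else 0 with ha
  have ha0 : ∀ j : Fin N, (j : ℕ) < k → a j = 0 := fun j hj => by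
    simp [ha, Nat.not_le.mpr hj]
  have hanonneg : ∀ i, 0 ≤ a i := fun i => by
    simp only [ha]
    split_ifs
    · exact hz _
    · exact le_rfl
  have hapos : ∀ i ∈ I, 0 < a i := fun i hi => by
    simp only [ha, dif_pos (hI i hi)]
    exact hzI ⟨i, hI i hi⟩ hi
  have key := (hconc a hanonneg hapos s hs).submatrix
    (Subtype.val_injective (p := fun i : Fin N => k ≤ (i : ℕ)))
  convert key using 1
  ext i j
  simp only [Matrix.of_apply, Matrix.submatrix_apply, hFz k, pderiv_aeval_zero_lt k _ i.2,
    pderiv_aeval_zero_lt k _ j.2, eval_aeval_zero_lt k a ha0]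
end

section
/- Let M be a simple matroid of rank r ≥ 3 on the ground set {1,…,N}, with basis generating polynomial F_M. Assume that for every basis B of M, F_M is strictly homogeneous log-concave at every point of the cone C^N_{B>0} = { z ∈ ℝ^N_{≥0} : z_i > 0 for all i ∈ B }. Then for any elements j_1,…,j_k of the ground set such that the deletion M_0 = M ∖ {j_1,…,j_k} still has rank r, and for every basis B_0 of M_0, the basis generating polynomial F_{M_0} (a polynomial in the remaining N−k variables) is strictly homogeneous log-concave at every point of C^{N−k}_{B_0>0} = { z ∈ ℝ^{N−k}_{≥0} : z_i > 0 for all i ∈ B_0 }. -/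
/-!
Extend a point `z` of the deleted matroid's variables by zero on `S`, obtaining `a`. The extended
point lies in the cone of `B₀` regarded as a basis of `M`. Setting the variables in `S` to zero
commutes with `∂/∂x_i` for `i ∉ S` (`pderiv_killVars`) and does not change values at points that
vanish on `S` (`eval_killVars`). Hence the matrix attached to `F₀` at `z` is the principal
submatrix, with rows and columns outside `S`, of the positive definite matrix attached to
`basisGen M` at `a`, and principal submatrices of positive definite matrices are positive definite.
-/

open MvPolynomial

/-- A matroid on a finite ground set `E`, given by its nonempty collection of bases satisfying
the basis exchange axiom. -/
structure FinMatroid (E : Type) [Fintype E] [DecidableEq E] where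
  bases : Finset (Finset E)
  bases_nonempty : bases.Nonempty
  exchange : ∀ B₁ ∈ bases, ∀ B₂ ∈ bases, ∀ x ∈ B₁ \ B₂,
    ∃ y ∈ B₂ \ B₁, insert y (B₁.erase x) ∈ bases

/-- The basis generating polynomial of a matroid. -/
noncomputable def basisGen {E : Type} [Fintype E] [DecidableEq E] (M : FinMatroid E) :
    MvPolynomial E ℝ :=
  ∑ B ∈ M.bases, ∏ i ∈ B, X i

/-- The substitution `x_j = 0` for `j ∈ S`, as an endomorphism of the polynomial ring. -/
noncomputable abbrev killVars {E : Type} [DecidableEq E] (S : Finset E) :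
    MvPolynomial E ℝ →ₐ[ℝ] MvPolynomial E ℝ :=
  aeval fun i : E => if i ∈ S then (0 : MvPolynomial E ℝ) else X i

lemma pderiv_killVars {E : Type} [DecidableEq E] (S : Finset E) {i : E} (hi : i ∉ S)
    (p : MvPolynomial E ℝ) :
    pderiv i (killVars S p) = killVars S (pderiv i p) := by
  induction p using MvPolynomial.induction_on with
  | C c => simp [killVars]
  | add p q hp hq => simp only [map_add, hp, hq]
  | mul_X p j hp =>
    have hX : pderiv i (killVars S (X j)) = killVars S (pderiv i (X j)) := by
      by_cases hj : j ∈ S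
      · have hij : j ≠ i := fun h => hi (h ▸ hj)
        simp [killVars, hj, pderiv_X_of_ne hij]
      · by_cases hij : j = i
        · subst hij
          simp [killVars, hj]
        · simp [killVars, hj, pderiv_X_of_ne hij]
    simp only [map_mul, Derivation.leibniz, smul_eq_mul, map_add, hp, hX]

lemma eval_killVars {E : Type} [DecidableEq E] (S : Finset E) {a : E → ℝ}
    (ha : ∀ i ∈ S, a i = 0) (p : MvPolynomial E ℝ) :
    eval a (killVars S p) = eval a p := by
  induction p using MvPolynomial.induction_on with
  | C c => simp [killVars]
  | add p q hp hq => simp only [map_add, hp, hq]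
  | mul_X p j hp =>
    rw [map_mul, map_mul, hp, map_mul]
    congr 1
    by_cases hj : j ∈ S
    · simp [killVars, hj, ha j hj]
    · simp [killVars, hj]

/-- let `M` be a simple matroid of rank `r ≥ 3` on `{1,…,N}` whose basis
generating polynomial is strictly homogeneous log-concave on the cone `C^N_{B>0}` for every
basis `B`.  Then for every deletion `M₀ = M ∖ S` of full rank `r` (i.e. some basis avoids `S`)
and every basis `B₀` of `M₀`, the basis generating polynomial of `M₀` (the restriction
`F_M|_{x_j = 0, j ∈ S}`, as a polynomial in the remaining `N - |S|` variables) is strictly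
homogeneous log-concave at every point of `C^{N-|S|}_{B₀>0}`. -/
theorem deletion_strictly_homog_logConcave (N r : ℕ) (hr : 3 ≤ r)
    (M : FinMatroid (Fin N))
    (hrank : ∀ B ∈ M.bases, B.card = r)
    (hsimple : ∀ e f : Fin N, ∃ B ∈ M.bases, e ∈ B ∧ f ∈ B)
    (hconc : ∀ B ∈ M.bases, ∀ a : Fin N → ℝ, (∀ i, 0 ≤ a i) → (∀ i ∈ B, 0 < a i) →
      ∀ s : ℝ, ((r : ℝ) - 1) / (r : ℝ) < s →
        (Matrix.of fun i j : Fin N =>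
          -(eval a (basisGen M)) * eval a (pderiv i (pderiv j (basisGen M)))
            + s * (eval a (pderiv i (basisGen M)) * eval a (pderiv j (basisGen M)))).PosDef)
    (S : Finset (Fin N)) (hS : ∃ B ∈ M.bases, Disjoint B S)
    (F₀ : MvPolynomial (Fin N) ℝ)
    (hF₀ : F₀ = (aeval fun i : Fin N =>
      if i ∈ S then (0 : MvPolynomial (Fin N) ℝ) else X i) (basisGen M))
    (B₀ : Finset (Fin N)) (hB₀ : B₀ ∈ M.bases) (hB₀S : Disjoint B₀ S) :
    ∀ z : {i : Fin N // i ∉ S} → ℝ,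
      (∀ i, 0 ≤ z i) → (∀ i : {i : Fin N // i ∉ S}, i.1 ∈ B₀ → 0 < z i) →
      ∀ s : ℝ, ((r : ℝ) - 1) / (r : ℝ) < s →
        (Matrix.of fun i j : {i : Fin N // i ∉ S} =>
          -(eval (fun i : Fin N => if h : i ∈ S then 0 else z ⟨i, h⟩) F₀)
              * eval (fun i : Fin N => if h : i ∈ S then 0 else z ⟨i, h⟩)
                  (pderiv i.1 (pderiv j.1 F₀))
            + s * (eval (fun i : Fin N => if h : i ∈ S then 0 else z ⟨i, h⟩) (pderiv i.1 F₀)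
                * eval (fun i : Fin N => if h : i ∈ S then 0 else z ⟨i, h⟩)
                    (pderiv j.1 F₀))).PosDef := by
  intro z hz hzpos s hs
  set a : Fin N → ℝ := fun i => if h : i ∈ S then 0 else z ⟨i, h⟩ with ha
  have haS : ∀ i ∈ S, a i = 0 := fun i hi => by simp [ha, hi]
  have hnonneg : ∀ i, 0 ≤ a i := by
    intro i
    by_cases hi : i ∈ S
    · exact (haS i hi).ge
    · simpa [ha, hi] using hz ⟨i, hi⟩
  have hpos : ∀ i ∈ B₀, 0 < a i := by
    intro i hi
    have hiS : i ∉ S := Finset.disjoint_left.mp hB₀S hi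
    simpa [ha, hiS] using hzpos ⟨i, hiS⟩ hi
  have hsub := (hconc B₀ hB₀ a hnonneg hpos s hs).submatrix
    (Subtype.val_injective (p := fun i : Fin N => i ∉ S))
  convert hsub using 1
  ext i j
  change F₀ = killVars S (basisGen M) at hF₀
  simp only [hF₀, Matrix.of_apply, Matrix.submatrix_apply, pderiv_killVars S i.2,
    pderiv_killVars S j.2, eval_killVars S haS]
end

section
/- Let Γ = (V, E) be a finite connected simple graph with |V| = r+1 ≥ 3 vertices and |E| = n ≥ 3 edges. Assume that for every spanning tree T of Γ, the Kirchhoff polynomial F_Γ is strictly homogeneous log-concave at every point of C^n_{T>0} = { z ∈ ℝ^n_{≥0} : z_e > 0 for all e ∈ T }. Then for every connected spanning subgraph Γ' = (V, E') with E' ⊆ E and |E'| = n−k, and for every spanning tree T' of Γ', the Kirchhoff polynomial F_{Γ'} (a polynomial in the n−k variables x_e, e ∈ E') is strictly homogeneous log-concave at every point of C^{n−k}_{T'>0} = { z ∈ ℝ^{n−k}_{≥0} : z_e > 0 for all e ∈ T' }. -/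
/-!
Setting to zero the variables of the edges missing from `G'` sends the Kirchhoff polynomial of `G`
to that of `G'` (`killCompl_kirchhoff`), and it commutes with the partial derivatives in the
remaining variables (`killCompl_pderiv`). Hence, for a point `z` of the cone of `T'`, the matrix of
`G'` at `z` is the principal submatrix, on the edges of `G'`, of the matrix of `G` at the extension
of `z` by zero. That extension lies in the cone of `T'` seen as a spanning tree of `G`, and
principal submatrices of positive definite matrices are positive definite.
-/

open MvPolynomial

/-- The inclusion of the edges of a subgraph. -/
def edgeIncl {V : Type} {G' G : SimpleGraph V} (hle : G' ≤ G) : G'.edgeSet ↪ G.edgeSet :=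
  Set.embeddingOfSubset _ _ (SimpleGraph.edgeSet_mono hle)

lemma isSpanningTree_map {V : Type} [Fintype V] [DecidableEq V] {G' G : SimpleGraph V}
    (hle : G' ≤ G) (T : Finset G'.edgeSet) :
    IsSpanningTree G (T.map (edgeIncl hle)) ↔ IsSpanningTree G' T := by
  have h : Subtype.val '' ((T.map (edgeIncl hle) : Finset G.edgeSet) : Set G.edgeSet)
      = Subtype.val '' (T : Set G'.edgeSet) := by
    rw [Finset.coe_map, Set.image_image]
    rfl
  rw [IsSpanningTree, IsSpanningTree, h, Finset.card_map]

lemma killCompl_X_of_notMem {σ τ : Type*} {f : σ → τ} (hf : f.Injective) {t : τ}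
    (ht : t ∉ Set.range f) : killCompl hf (X t : MvPolynomial τ ℝ) = 0 := by
  simp [killCompl, ht]

lemma killCompl_X_apply {σ τ : Type*} {f : σ → τ} (hf : f.Injective) (i : σ) :
    killCompl hf (X (f i) : MvPolynomial τ ℝ) = X i := by
  rw [← rename_X f i, killCompl_rename_app]

lemma killCompl_pderiv {σ τ : Type*} {f : σ → τ} (hf : f.Injective) (i : σ)
    (p : MvPolynomial τ ℝ) : killCompl hf (pderiv (f i) p) = pderiv i (killCompl hf p) := by
  classical
  induction p using MvPolynomial.induction_on with
  | C a => simp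
  | add p q hp hq => simp [hp, hq]
  | mul_X p t hp =>
    simp only [Derivation.leibniz, smul_eq_mul, map_add, map_mul, hp]
    congr 2
    by_cases ht : t ∈ Set.range f
    · obtain ⟨j, rfl⟩ := ht
      rw [killCompl_X_apply]
      by_cases hij : j = i
      · subst hij
        simp
      · rw [pderiv_X_of_ne hij, pderiv_X_of_ne (fun h => hij (hf h)), map_zero]
    · rw [killCompl_X_of_notMem hf ht, pderiv_X_of_ne (fun h => ht ⟨i, h.symm⟩), map_zero, map_zero]

lemma eval_killCompl {σ τ : Type*} {f : σ → τ} (hf : f.Injective) (z : σ → ℝ)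
    (p : MvPolynomial τ ℝ) : eval z (killCompl hf p) = eval (Function.extend f z 0) p := by
  induction p using MvPolynomial.induction_on with
  | C a => simp
  | add p q hp hq => simp [hp, hq]
  | mul_X p t hp =>
    rw [map_mul, map_mul, hp, map_mul, eval_X]
    congr 1
    by_cases ht : t ∈ Set.range f
    · obtain ⟨j, rfl⟩ := ht
      rw [killCompl_X_apply, eval_X, hf.extend_apply]
    · rw [killCompl_X_of_notMem hf ht, map_zero, Function.extend_apply' _ _ _ ht, Pi.zero_apply]

/-- A spanning tree of `G` survives the substitution exactly when all its edges lie in `G'`, and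
those trees are the spanning trees of `G'`. -/
lemma killCompl_kirchhoff {V : Type} [Fintype V] [DecidableEq V] {G' G : SimpleGraph V}
    [Fintype G.edgeSet] [Fintype G'.edgeSet] (hle : G' ≤ G) :
    killCompl (edgeIncl hle).injective (kirchhoff G) = kirchhoff G' := by
  classical
  rw [kirchhoff, kirchhoff, map_sum]
  symm
  refine Finset.sum_of_injOn (fun T => T.map (edgeIncl hle))
    (Finset.map_injective _).injOn (by simp) ?_ ?_
  · intro T _ hT
    have hex : ∃ e ∈ T, e ∉ Set.range (edgeIncl hle) := by
      by_contra! h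
      obtain ⟨S, -, rfl⟩ := Finset.subset_map_iff.1
        (show T ⊆ Finset.univ.map (edgeIncl hle) from fun e he => by simpa using h e he)
      exact hT ⟨S, by simp, rfl⟩
    obtain ⟨e, he, her⟩ := hex
    split_ifs
    · rw [map_prod]
      exact Finset.prod_eq_zero he (killCompl_X_of_notMem _ her)
    · exact map_zero _
  · intro T _
    simp only [isSpanningTree_map]
    split_ifs
    · rw [map_prod, Finset.prod_map]
      exact Finset.prod_congr rfl fun e _ => (killCompl_X_apply _ e).symm
    · exact (map_zero _).symm

/-- let `Γ` be a finite connected simple graph with `r + 1 ≥ 3` vertices and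
`n ≥ 3` edges whose Kirchhoff polynomial is strictly homogeneous log-concave on the cone
`C^n_{T>0}` for every spanning tree `T`.  Then for every connected spanning subgraph `Γ'` (same
vertex set, `n - k` edges) and every spanning tree `T'` of `Γ'`, the Kirchhoff polynomial of
`Γ'` is strictly homogeneous log-concave at every point of `C^{n-k}_{T'>0}`. -/
theorem subgraph_kirchhoff_strictly_homog_logConcave
    {V : Type} [Fintype V] [DecidableEq V] (G : SimpleGraph V) [Fintype G.edgeSet]
    (hconn : G.Connected) (r n k : ℕ)
    (hV : Fintype.card V = r + 1) (hr : 3 ≤ r + 1)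
    (hE : Fintype.card G.edgeSet = n) (hn : 3 ≤ n)
    (hconc : ∀ T : Finset G.edgeSet, IsSpanningTree G T →
      ∀ a : G.edgeSet → ℝ, (∀ e, 0 ≤ a e) → (∀ e ∈ T, 0 < a e) →
      ∀ s : ℝ, ((r : ℝ) - 1) / (r : ℝ) < s →
        (Matrix.of fun i j : G.edgeSet =>
          -(eval a (kirchhoff G)) * eval a (pderiv i (pderiv j (kirchhoff G)))
            + s * (eval a (pderiv i (kirchhoff G)) * eval a (pderiv j (kirchhoff G)))).PosDef)
    (G' : SimpleGraph V) [Fintype G'.edgeSet] (hle : G' ≤ G) (hconn' : G'.Connected)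
    (hE' : Fintype.card G'.edgeSet = n - k) (hkn : k ≤ n)
    (T' : Finset G'.edgeSet) (hT' : IsSpanningTree G' T') :
    ∀ z : G'.edgeSet → ℝ, (∀ e, 0 ≤ z e) → (∀ e ∈ T', 0 < z e) →
      ∀ s : ℝ, ((r : ℝ) - 1) / (r : ℝ) < s →
        (Matrix.of fun i j : G'.edgeSet =>
          -(eval z (kirchhoff G')) * eval z (pderiv i (pderiv j (kirchhoff G')))
            + s * (eval z (pderiv i (kirchhoff G')) * eval z (pderiv j (kirchhoff G')))).PosDef := by
  intro z hz hzT s hs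
  have hinj := (edgeIncl hle).injective
  have hpos := hconc (T'.map (edgeIncl hle)) ((isSpanningTree_map hle T').2 hT')
    (Function.extend (edgeIncl hle) z 0) ?_ ?_ s hs
  · convert hpos.submatrix hinj using 1
    ext i j
    simp only [Matrix.of_apply, Matrix.submatrix_apply, ← eval_killCompl hinj, killCompl_pderiv,
      killCompl_kirchhoff]
  · intro e
    by_cases he : e ∈ Set.range (edgeIncl hle)
    · obtain ⟨j, rfl⟩ := he
      rw [hinj.extend_apply]
      exact hz j
    · rw [Function.extend_apply' _ _ _ he, Pi.zero_apply]
  · intro e he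
    obtain ⟨j, hj, rfl⟩ := Finset.mem_map.1 he
    rw [hinj.extend_apply]
    exact hzT j hj
end
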